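/- Let E ⊂ ℝ^{N×n} be bounded. Assume that there exist compact sets E_δ ⊂ ℝ^{N×n}, δ > 0, such that, setting K_δ := Rco_f E_δ and K := Rco_f E, one has K_δ ⊂ int K for every δ > 0 and: (i) for every ε > 0 there exists δ_0 > 0 such that dist(η; E) ≤ ε for all η ∈ E_δ and all δ ∈ (0, δ_0]; (ii) if η ∈ int K then there exists δ_0 > 0 such that η ∈ K_δ for all δ ∈ (0, δ_0]. Then int Rco_f E has the relaxation property with respect to E. -/

import Mathlib

open MeasureTheory Filter

attribute [local instance] Classical.propDecidable
attribute [local instance] Matrix.frobeniusNormedAddCommGroup Matrix.frobeniusNormedSpace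

noncomputable section

/-- The space of real `N × n` matrices. -/
abbrev Mat (N n : ℕ) : Type := Matrix (Fin N) (Fin n) ℝ

/-- A function `f : ℝ^{N×n} → ℝ` is rank one convex. -/
def RankOneConvexFun {N n : ℕ} (f : Mat N n → ℝ) : Prop :=
  ∀ lam ∈ Set.Icc (0:ℝ) 1, ∀ ξ η : Mat N n, (ξ - η).rank = 1 →
    f (lam • ξ + (1 - lam) • η) ≤ lam * f ξ + (1 - lam) * f η

/-- The hull `Rco_f E`. -/
def RcoF {N n : ℕ} (E : Set (Mat N n)) : Set (Mat N n) :=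
  {ξ | ∀ f : Mat N n → ℝ, RankOneConvexFun f → (∀ η ∈ E, f η ≤ 0) → f ξ ≤ 0}

/-- A set of matrices is rank one convex. -/
def RankOneConvexSet {N n : ℕ} (S : Set (Mat N n)) : Prop :=
  ∀ A ∈ S, ∀ B ∈ S, (A - B).rank = 1 → ∀ t ∈ Set.Icc (0:ℝ) 1, t • A + (1 - t) • B ∈ S

/-- The property `(H_I(U))`, phrased on lists of (weight, matrix) pairs. -/
inductive HIProp {N n : ℕ} (U : Set (Mat N n)) : List (ℝ × Mat N n) → Prop where
  | single (l : ℝ) (ξ : Mat N n) (hξ : ξ ∈ U) : HIProp U [(l, ξ)]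
  | pair (l₁ l₂ : ℝ) (ξ₁ ξ₂ : Mat N n) (h₁ : ξ₁ ∈ U) (h₂ : ξ₂ ∈ U)
      (hrank : (ξ₁ - ξ₂).rank = 1) : HIProp U [(l₁, ξ₁), (l₂, ξ₂)]
  | step (L rest : List (ℝ × Mat N n)) (l₁ l₂ : ℝ) (ξ₁ ξ₂ : Mat N n)
      (hperm : L.Perm ((l₁, ξ₁) :: (l₂, ξ₂) :: rest)) (hrest : rest ≠ [])
      (h₁ : ξ₁ ∈ U) (h₂ : ξ₂ ∈ U) (hrank : (ξ₁ - ξ₂).rank = 1)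
      (hrec : HIProp U ((l₁ + l₂, ((l₁ + l₂)⁻¹) • (l₁ • ξ₁ + l₂ • ξ₂)) :: rest)) :
      HIProp U L

/-- The family `(λ_i, ξ_i)_{1 ≤ i ≤ I}` satisfies `(H_I(U))`. -/
def SatisfiesH {N n : ℕ} (U : Set (Mat N n)) (I : ℕ) (l : Fin I → ℝ)
    (ξ : Fin I → Mat N n) : Prop :=
  HIProp U (List.ofFn fun i => (l i, ξ i))

/-- The gradient of a map `u : ℝ^n → ℝ^N`, as an `N × n` matrix. -/
def matGrad {N n : ℕ} (u : (Fin n → ℝ) → Fin N → ℝ) (x : Fin n → ℝ) : Mat N n :=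
  LinearMap.toMatrix' (fderiv ℝ u x).toLinearMap

/-- `u` is affine on the set `s`. -/
def AffineOn {N n : ℕ} (u : (Fin n → ℝ) → Fin N → ℝ) (s : Set (Fin n → ℝ)) : Prop :=
  ∃ (A : Mat N n) (b : Fin N → ℝ), ∀ x ∈ s, u x = A.mulVec x + b

/-- `u` is piecewise affine on the open set `Ω`. -/
def PiecewiseAffineOn {N n : ℕ} (u : (Fin n → ℝ) → Fin N → ℝ)
    (Ω : Set (Fin n → ℝ)) : Prop :=
  ContinuousOn u (closure Ω) ∧
  ∃ P : ℕ → Set (Fin n → ℝ),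
    (∀ k, IsOpen (P k)) ∧ (∀ k, P k ⊆ Ω) ∧
    (∀ k l, k ≠ l → Disjoint (P k) (P l)) ∧
    volume (Ω \ ⋃ k, P k) = 0 ∧ ∀ k, AffineOn u (P k)

/-- `u` is piecewise `C¹` on the open set `Ω`. -/
def PiecewiseC1On {N n : ℕ} (u : (Fin n → ℝ) → Fin N → ℝ)
    (Ω : Set (Fin n → ℝ)) : Prop :=
  ContinuousOn u (closure Ω) ∧
  ∃ P : ℕ → Set (Fin n → ℝ),
    (∀ k, IsOpen (P k)) ∧ (∀ k, P k ⊆ Ω) ∧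
    (∀ k l, k ≠ l → Disjoint (P k) (P l)) ∧
    volume (Ω \ ⋃ k, P k) = 0 ∧ ∀ k, ContDiffOn ℝ 1 u (P k)

/-- `u ∈ φ + W₀^{1,∞}(Ω; ℝ^N)`: `u` is Lipschitz on `closure Ω` and agrees with `φ`
on the boundary of `Ω`. -/
def MemW01inf {N n : ℕ} (Ω : Set (Fin n → ℝ)) (φ u : (Fin n → ℝ) → Fin N → ℝ) : Prop :=
  (∃ C : NNReal, LipschitzOnWith C u (closure Ω)) ∧ ∀ x ∈ frontier Ω, u x = φ x

/-- `K` has the relaxation property with respect to `E`. -/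
def HasRelaxationProperty {N n : ℕ} (K E : Set (Mat N n)) : Prop :=
  ∀ Ω : Set (Fin n → ℝ), IsOpen Ω → Bornology.IsBounded Ω →
    ∀ ξ ∈ K, ∀ b : Fin N → ℝ,
      ∃ u : ℕ → (Fin n → ℝ) → Fin N → ℝ,
        (∀ ν, PiecewiseAffineOn (u ν) Ω) ∧
        (∀ ν, MemW01inf Ω (fun x => ξ.mulVec x + b) (u ν)) ∧
        (∀ ν, ∀ᵐ x ∂(volume.restrict Ω), matGrad (u ν) x ∈ E ∪ K) ∧
        (∃ C : NNReal, ∀ ν, LipschitzOnWith C (u ν) (closure Ω)) ∧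
        TendstoUniformlyOn u (fun x => ξ.mulVec x + b) atTop (closure Ω) ∧
        Tendsto (fun ν => ∫ x in Ω, Metric.infDist (matGrad (u ν) x) E) atTop (nhds 0)

/-- The singular values of a square matrix, in nondecreasing order:
the square roots of the eigenvalues of `ξ ξᵀ`, sorted. -/
def singularValues {n : ℕ} (ξ : Matrix (Fin n) (Fin n) ℝ) (i : Fin n) : ℝ :=
  Real.sqrt ((Matrix.isHermitian_mul_conjTranspose_self ξ).eigenvalues
    (Tuple.sort (Matrix.isHermitian_mul_conjTranspose_self ξ).eigenvalues i))

end

section Statements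

open Metric Set

/-!
For `ξ ∈ U` let `T ξ` be the least mean distance of the gradient to `E` that can be approached by
Lipschitz maps which equal an affine map of gradient `ξ` off a bounded open set, are uniformly close
to it, and have gradients in `U` almost everywhere. Since the pieces on which a map is affine may be
refined independently of each other, laminating between two rank one connected matrices shows that
`T` is rank one convex on `U`.

A hull `Rco_f F ⊆ U` is separated from the complement of `U` by a globally rank one convex function
that is nonpositive on `F` and large off `U`; glued to it, `T - ε` extends to a globally rank one
convex function. If `F` is `ε`-close to `E` then `T ≤ ε` on `F`, hence `T ≤ ε` on `Rco_f F`. As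
`F` varies these hulls exhaust `U`, so `T` vanishes on `U`, which is the relaxation property.
-/

section RankOne

variable {N n : ℕ}

lemma rank_eq_one_iff_exists_vecMulVec {M : Mat N n} :
    M.rank = 1 ↔ ∃ a b, a ≠ 0 ∧ b ≠ 0 ∧ M = Matrix.vecMulVec a b := by
  constructor
  · intro hM
    rw [Matrix.rank, finrank_eq_one_iff'] at hM
    obtain ⟨⟨a, ha⟩, ha0, hspan⟩ := hM
    choose b hb using fun j ↦ hspan ⟨M.mulVec (Pi.single j 1), ⟨Pi.single j 1, rfl⟩⟩
    have hab : M = Matrix.vecMulVec a b := by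
      ext i j
      have hij : b j * a i = M i j := by simpa using congrFun (congrArg Subtype.val (hb j)) i
      rw [Matrix.vecMulVec_apply, ← hij, mul_comm]
    refine ⟨a, b, fun h ↦ ha0 (Subtype.ext h), ?_, hab⟩
    rintro rfl
    obtain ⟨x, hx⟩ := ha
    have ha_zero : a = 0 := by rw [← hx, hab]; simp [Matrix.vecMulVec_mulVec]
    exact ha0 (Subtype.ext ha_zero)
  · rintro ⟨a, b, ha, hb, rfl⟩
    refine le_antisymm (Matrix.rank_vecMulVec_le a b) (Nat.one_le_iff_ne_zero.2 fun h ↦ ?_)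
    obtain ⟨i, hi⟩ := Function.ne_iff.1 ha
    obtain ⟨j, hj⟩ := Function.ne_iff.1 hb
    rw [Matrix.rank, Submodule.finrank_eq_zero, LinearMap.range_eq_bot] at h
    have hij := congrFun (LinearMap.congr_fun h (Pi.single j 1)) i
    simp [Matrix.vecMulVec_apply] at hij
    tauto

lemma rank_smul_of_ne_zero (M : Mat N n) {c : ℝ} (hc : c ≠ 0) : (c • M).rank = M.rank :=
  Matrix.rank_smul_of_mem_nonZeroDivisors M (mem_nonZeroDivisors_of_ne_zero hc)

end RankOne

section SeparatelyConvex

variable {ι : Type*} [DecidableEq ι] {f : (ι → ℝ) → ℝ} {M : ℝ}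

/-- Separate convexity: convexity in each coordinate when the other coordinates are frozen. -/
def SeparatelyConvex (f : (ι → ℝ) → ℝ) : Prop :=
  ∀ x i, ConvexOn ℝ univ fun t ↦ f (Function.update x i t)

lemma SeparatelyConvex.le_of_forall_vertex_le [Finite ι] (hf : SeparatelyConvex f)
    {a b : ι → ℝ} (hM : ∀ v ∈ univ.pi fun i ↦ {a i, b i}, f v ≤ M) {x : ι → ℝ}
    (hx : x ∈ Icc a b) : f x ≤ M := by
  cases nonempty_fintype ι
  have key : ∀ s : Finset ι, ∀ v ∈ univ.pi fun i ↦ ({a i, b i} : Set ℝ),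
      f (s.piecewise x v) ≤ M := by
    intro s
    induction s using Finset.induction_on with
    | empty => simpa using hM
    | insert j s hj ih =>
      intro v hv
      have hend : ∀ c ∈ ({a j, b j} : Set ℝ), f (Function.update (s.piecewise x v) j c) ≤ M := by
        intro c hc
        rw [Finset.update_piecewise_of_notMem s _ _ hj]
        refine ih _ fun i _ ↦ ?_
        rcases eq_or_ne i j with rfl | hij
        · simpa using hc
        · simpa [hij] using hv i (mem_univ i)
      rw [Finset.piecewise_insert]
      exact ((hf (s.piecewise x v) j).le_max_of_mem_Icc (mem_univ _) (mem_univ _)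
        ⟨hx.1 j, hx.2 j⟩).trans (max_le (hend _ (by simp)) (hend _ (by simp)))
  obtain h := key Finset.univ a fun i _ ↦ by simp
  rwa [Finset.piecewise_univ] at h

lemma SeparatelyConvex.bddAbove_image_Icc [Finite ι] (hf : SeparatelyConvex f) (a b : ι → ℝ) :
    BddAbove (f '' Icc a b) := by
  have hfin : (univ.pi fun i ↦ ({a i, b i} : Set ℝ)).Finite :=
    Finite.pi fun i ↦ toFinite _
  obtain ⟨M, hM⟩ := (hfin.image f).bddAbove
  exact ⟨M, forall_mem_image.2 fun x hx ↦
    hf.le_of_forall_vertex_le (fun v hv ↦ hM (mem_image_of_mem f hv)) hx⟩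

lemma sub_le_mul_sub_of_convexOn {φ : ℝ → ℝ} (hφ : ConvexOn ℝ univ φ) {a t : ℝ}
    (hM : ∀ s ∈ closedBall a 1, φ s ≤ M) : M - φ t ≤ (1 + |t - a|) * (M - φ a) := by
  set d := t - a
  have hden : 0 < 1 + |d| := by positivity
  have hs : φ (a - SignType.sign d) ≤ M := by
    refine hM _ ?_
    rcases lt_trichotomy d 0 with h | h | h <;> simp [h, sign_neg, sign_pos]
  have hcomb : (1 + |d|)⁻¹ * t + (|d| / (1 + |d|)) * (a - SignType.sign d) = a := by
    have : t = a + SignType.sign d * |d| := by rw [sign_mul_abs]; ring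
    field_simp
    linear_combination this
  have hconv := hφ.2 (mem_univ t) (mem_univ (a - SignType.sign d)) (inv_nonneg.2 hden.le)
    (div_nonneg (abs_nonneg d) hden.le) (by field_simp)
  simp only [smul_eq_mul, hcomb] at hconv
  have hscaled : (1 + |d|) * φ a ≤ φ t + |d| * φ (a - SignType.sign d) := by
    calc (1 + |d|) * φ a
        ≤ (1 + |d|) * ((1 + |d|)⁻¹ * φ t + |d| / (1 + |d|) * φ (a - SignType.sign d)) := by gcongr
      _ = φ t + |d| * φ (a - SignType.sign d) := by field_simp
  nlinarith [mul_le_mul_of_nonneg_left hs (abs_nonneg d)]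

lemma SeparatelyConvex.sub_le_pow_mul_sub [Fintype ι] (hf : SeparatelyConvex f) {x₀ x : ι → ℝ}
    (hM : ∀ y ∈ closedBall x₀ 1, f y ≤ M) (hx : x ∈ closedBall x₀ 1) :
    M - f x ≤ (1 + dist x x₀) ^ Fintype.card ι * (M - f x₀) := by
  have key : ∀ s : Finset ι,
      M - f (s.piecewise x x₀) ≤ (1 + dist x x₀) ^ s.card * (M - f x₀) := by
    intro s
    induction s using Finset.induction_on with
    | empty => simp
    | insert j s hj ih =>
      set z := s.piecewise x x₀
      have hball : closedBall x₀ (1 : ℝ) = univ.pi fun i ↦ closedBall (x₀ i) 1 :=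
        closedBall_pi x₀ zero_le_one
      have hzmem : z ∈ univ.pi fun i ↦ closedBall (x₀ i) (1 : ℝ) :=
        s.piecewise_mem_set_pi (hball ▸ hx) fun i _ ↦ mem_closedBall_self zero_le_one
      have hline : ∀ t ∈ closedBall (x₀ j) 1, f (Function.update z j t) ≤ M := fun t ht ↦
        hM _ (hball ▸ update_mem_pi_iff_of_mem hzmem |>.2 fun _ ↦ ht)
      have hstep := sub_le_mul_sub_of_convexOn (hf z j) (t := x j) hline
      have hzj : Function.update z j (x₀ j) = z := by
        rw [← Finset.piecewise_eq_of_notMem s x x₀ hj, Function.update_eq_self]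
      rw [hzj] at hstep
      have hdist : |x j - x₀ j| ≤ dist x x₀ := dist_le_pi_dist x x₀ j
      have hz : f z ≤ M := hM z (hball ▸ hzmem)
      rw [Finset.piecewise_insert, Finset.card_insert_of_notMem hj, pow_succ']
      calc M - f (Function.update z j (x j))
          ≤ (1 + |x j - x₀ j|) * (M - f z) := hstep
        _ ≤ (1 + dist x x₀) * (M - f z) := by gcongr
        _ ≤ (1 + dist x x₀) * ((1 + dist x x₀) ^ s.card * (M - f x₀)) := by gcongr
        _ = (1 + dist x x₀) * (1 + dist x x₀) ^ s.card * (M - f x₀) := by ring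
  simpa [Finset.piecewise_univ] using key Finset.univ

lemma SeparatelyConvex.lowerSemicontinuous [Finite ι] (hf : SeparatelyConvex f) :
    LowerSemicontinuous f := by
  cases nonempty_fintype ι
  intro x₀ c hc
  obtain ⟨M, hM⟩ := hf.bddAbove_image_Icc (fun i ↦ x₀ i - 1) (fun i ↦ x₀ i + 1)
  have hbox : closedBall x₀ 1 = Icc (fun i ↦ x₀ i - 1) fun i ↦ x₀ i + 1 := by
    simp only [closedBall_pi x₀ zero_le_one, ← pi_univ_Icc, Real.closedBall_eq_Icc]
  have hball : ∀ y ∈ closedBall x₀ 1, f y ≤ M := fun y hy ↦ hM (mem_image_of_mem f (hbox ▸ hy))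
  have hlim : Tendsto (fun x ↦ (1 + dist x x₀) ^ Fintype.card ι * (M - f x₀)) (nhds x₀)
      (nhds (M - f x₀)) := by
    have hcont : Continuous fun x ↦ (1 + dist x x₀) ^ Fintype.card ι * (M - f x₀) := by fun_prop
    simpa using hcont.tendsto x₀
  filter_upwards [hlim.eventually_lt_const (show M - f x₀ < M - c by linarith),
    closedBall_mem_nhds x₀ one_pos] with x hx hx1
  linarith [hf.sub_le_pow_mul_sub hball hx1]

end SeparatelyConvex

section RankOneConvexFun

variable {N n : ℕ} {f g T : Mat N n → ℝ} {E U : Set (Mat N n)}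

/-- Rank one convexity of `T` on a set `U` of matrices, which need not be rank one convex: the
inequality is required only when both end points and the intermediate matrix lie in `U`. -/
def RankOneConvexOn (U : Set (Mat N n)) (T : Mat N n → ℝ) : Prop :=
  ∀ A ∈ U, ∀ B ∈ U, (A - B).rank = 1 → ∀ l ∈ Icc (0 : ℝ) 1, l • A + (1 - l) • B ∈ U →
    T (l • A + (1 - l) • B) ≤ l * T A + (1 - l) * T B

lemma RankOneConvexOn.convexOn_line (hT : RankOneConvexOn U T) {ξ v : Mat N n} (hv : v.rank = 1)
    {S : Set ℝ} (hS : Convex ℝ S) (hSU : ∀ r ∈ S, ξ + r • v ∈ U) :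
    ConvexOn ℝ S fun r ↦ T (ξ + r • v) := by
  refine ⟨hS, fun x hx y hy k l hk hl hkl ↦ ?_⟩
  have hmem := hSU _ (hS hx hy hk hl hkl)
  obtain rfl : l = 1 - k := by linarith
  rcases eq_or_ne x y with rfl | hxy
  · rw [Convex.combo_self hkl, Convex.combo_self hkl]
  have hrank : ((ξ + x • v) - (ξ + y • v)).rank = 1 := by
    rw [add_sub_add_left_eq_sub, ← sub_smul, rank_smul_of_ne_zero _ (sub_ne_zero.2 hxy), hv]
  have hcomb : k • (ξ + x • v) + (1 - k) • (ξ + y • v) = ξ + (k • x + (1 - k) • y) • v := by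
    module
  have h := hT _ (hSU x hx) _ (hSU y hy) hrank k ⟨hk, by linarith⟩ (by rwa [hcomb])
  simpa only [hcomb, smul_eq_mul] using h

lemma rankOneConvexFun_iff_convexOn_line :
    RankOneConvexFun f ↔
      ∀ ξ v : Mat N n, v.rank = 1 → ConvexOn ℝ univ fun r : ℝ ↦ f (ξ + r • v) := by
  constructor
  · intro hf ξ v hv
    have hfU : RankOneConvexOn univ f := fun A _ B _ hAB l hl _ ↦ hf l hl A B hAB
    exact hfU.convexOn_line hv convex_univ fun _ _ ↦ mem_univ _
  · intro hf l hl ξ η hrank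
    have h := (hf η (ξ - η) hrank).2 (mem_univ 1) (mem_univ 0) hl.1 (sub_nonneg.2 hl.2) (by ring)
    have hcomb : l • ξ + (1 - l) • η = η + l • (ξ - η) := by module
    simpa [hcomb] using h

lemma rankOneConvexFun_of_convexOn (hf : ConvexOn ℝ univ f) : RankOneConvexFun f :=
  fun _ hl ξ η _ ↦ hf.2 (mem_univ ξ) (mem_univ η) hl.1 (sub_nonneg.2 hl.2) (by ring)

namespace RankOneConvexFun

lemma sup (hf : RankOneConvexFun f) (hg : RankOneConvexFun g) :
    RankOneConvexFun fun ξ ↦ max (f ξ) (g ξ) := by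
  rw [rankOneConvexFun_iff_convexOn_line] at *
  exact fun ξ v hv ↦ (hf ξ v hv).sup (hg ξ v hv)

lemma const_mul (hf : RankOneConvexFun f) {k : ℝ} (hk : 0 ≤ k) :
    RankOneConvexFun fun ξ ↦ k * f ξ := by
  rw [rankOneConvexFun_iff_convexOn_line] at *
  exact fun ξ v hv ↦ (hf ξ v hv).smul hk

lemma lowerSemicontinuous (hf : RankOneConvexFun f) : LowerSemicontinuous f := by
  have hsep : SeparatelyConvex fun x : Fin N × Fin n → ℝ ↦ f (Matrix.of (Function.curry x)) := by
    rintro x ⟨i, j⟩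
    have hrank : (Matrix.single i j (1 : ℝ)).rank = 1 :=
      rank_eq_one_iff_exists_vecMulVec.2 ⟨Pi.single i 1, Pi.single j 1, by simp, by simp,
        Matrix.single_eq_single_vecMulVec_single i j⟩
    convert rankOneConvexFun_iff_convexOn_line.1 hf
      (Matrix.of (Function.curry (Function.update x (i, j) 0))) _ hrank using 3 with t
    ext k l
    by_cases hkl : (k, l) = (i, j)
    · simp_all [Function.curry]
    · have hkl' : ¬ (i = k ∧ j = l) := fun h ↦ hkl (by rw [h.1, h.2])
      simp [Function.curry, hkl, hkl']
  have huncurry : Continuous fun (ξ : Mat N n) (p : Fin N × Fin n) ↦ ξ p.1 p.2 := by fun_prop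
  have hcomp := LowerSemicontinuous.comp hsep.lowerSemicontinuous huncurry
  exact hcomp

end RankOneConvexFun

lemma rankOneConvexFun_norm_sub_const (R : ℝ) :
    RankOneConvexFun fun ξ : Mat N n ↦ ‖ξ‖ - R :=
  rankOneConvexFun_of_convexOn (convexOn_univ_norm.sub (concaveOn_const R convex_univ))

lemma RcoF_subset_closedBall {R : ℝ} (hE : E ⊆ closedBall 0 R) : RcoF E ⊆ closedBall 0 R := by
  intro ξ hξ
  have h := hξ _ (rankOneConvexFun_norm_sub_const R) fun η hη ↦ by
    simpa using hE hη
  simpa using h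

lemma subset_RcoF (E : Set (Mat N n)) : E ⊆ RcoF E := fun η hη _ _ h ↦ h η hη

lemma isBounded_RcoF (hE : Bornology.IsBounded E) : Bornology.IsBounded (RcoF E) := by
  obtain ⟨R, hR⟩ := hE.subset_closedBall 0
  exact isBounded_closedBall.subset (RcoF_subset_closedBall hR)

lemma exists_rankOneConvexFun_forall_notMem_le (hE : Bornology.IsBounded E) (hU : IsOpen U)
    (hEU : RcoF E ⊆ U) (c : ℝ) :
    ∃ g, RankOneConvexFun g ∧ (∀ η ∈ E, g η ≤ 0) ∧ ∀ ξ ∉ U, c ≤ g ξ := by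
  obtain ⟨R, hR⟩ := hE.subset_closedBall 0
  have hcompact : IsCompact (closedBall (0 : Mat N n) (R + |c|) \ U) :=
    (isCompact_closedBall 0 _).diff hU
  obtain ⟨g, hg, hgE, hgc⟩ : ∃ g, RankOneConvexFun g ∧ (∀ η ∈ E, g η ≤ 0) ∧
      ∀ ξ ∈ closedBall (0 : Mat N n) (R + |c|) \ U, c ≤ g ξ := by
    refine hcompact.induction_on (p := fun S ↦ ∃ g, RankOneConvexFun g ∧ (∀ η ∈ E, g η ≤ 0) ∧
      ∀ ξ ∈ S, c ≤ g ξ) ?_ ?_ ?_ ?_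
    · exact ⟨_, rankOneConvexFun_norm_sub_const R, fun η hη ↦ by simpa using hR hη, by simp⟩
    · rintro S T hST ⟨g, hg, hgE, hgc⟩
      exact ⟨g, hg, hgE, fun ξ hξ ↦ hgc ξ (hST hξ)⟩
    · rintro S T ⟨g, hg, hgE, hgc⟩ ⟨g', hg', hgE', hgc'⟩
      refine ⟨_, hg.sup hg', fun η hη ↦ max_le (hgE η hη) (hgE' η hη), ?_⟩
      rintro ξ (hξ | hξ)
      exacts [le_max_of_le_left (hgc ξ hξ), le_max_of_le_right (hgc' ξ hξ)]
    · rintro ξ ⟨-, hξU⟩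
      obtain ⟨f, hf, hfE, hfξ⟩ : ∃ f, RankOneConvexFun f ∧ (∀ η ∈ E, f η ≤ 0) ∧ 0 < f ξ := by
        simpa [RcoF] using mt (@hEU ξ) hξU
      have hscale : c < (|c| + 1) / f ξ * f ξ := by
        rw [div_mul_cancel₀ _ hfξ.ne']
        linarith [le_abs_self c]
      have hmul : RankOneConvexFun fun η ↦ (|c| + 1) / f ξ * f η := hf.const_mul (by positivity)
      exact ⟨_, mem_nhdsWithin_of_mem_nhds (hmul.lowerSemicontinuous ξ c hscale), _, hmul,
        fun η hη ↦ mul_nonpos_of_nonneg_of_nonpos (by positivity) (hfE η hη),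
        fun η hη ↦ le_of_lt hη⟩
  refine ⟨_, hg.sup (rankOneConvexFun_norm_sub_const R),
    fun η hη ↦ max_le (hgE η hη) (by simpa using hR hη), fun ξ hξ ↦ ?_⟩
  by_cases hnorm : ξ ∈ closedBall 0 (R + |c|)
  · exact le_max_of_le_left (hgc ξ ⟨hnorm, hξ⟩)
  · refine le_max_of_le_right ?_
    rw [mem_closedBall_zero_iff, not_le] at hnorm
    linarith [le_abs_self c]

end RankOneConvexFun

section Gluing

variable {q τ : ℝ → ℝ} {a b : ℝ}

lemma exists_le_combo_of_lt {F : ℝ → ℝ} (hq : ConvexOn ℝ univ q) (hab : a < b)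
    (hqF : ∀ r, q r ≤ F r) (hFq : ∀ r, a ≤ q r → F r = q r) {y : ℝ} (hy : q y < a) (w : ℝ) :
    ∃ μ ∈ Ioc (0 : ℝ) 1, q (y + μ * (w - y)) < b ∧
      F (y + μ * (w - y)) ≤ (1 - μ) * F y + μ * F w := by
  by_cases hw : q w < b
  · exact ⟨1, by simp, by simp [hw]⟩
  have hcont : ContinuousOn (fun μ : ℝ ↦ q (y + μ * (w - y))) (Icc 0 1) :=
    ((hq.continuousOn isOpen_univ).comp_continuous (by fun_prop) fun _ ↦ mem_univ _).continuousOn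
  obtain ⟨μ, hμ, hqμ : q (y + μ * (w - y)) = a⟩ :=
    intermediate_value_Icc zero_le_one hcont ⟨by simpa using hy.le, by simpa using by linarith⟩
  have hμ0 : μ ≠ 0 := by
    rintro rfl
    simp [hy.ne] at hqμ
  refine ⟨μ, ⟨lt_of_le_of_ne hμ.1 hμ0.symm, hμ.2⟩, hqμ.trans_lt hab, ?_⟩
  have hμ1 : 0 ≤ 1 - μ := sub_nonneg.2 hμ.2
  have hμ0 : 0 ≤ μ := hμ.1
  calc F (y + μ * (w - y)) = q ((1 - μ) • y + μ • w) := by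
        rw [hFq _ hqμ.ge, smul_eq_mul, smul_eq_mul]
        ring_nf
    _ ≤ (1 - μ) * q y + μ * q w := hq.2 (mem_univ y) (mem_univ w) hμ1 hμ0 (by ring)
    _ ≤ (1 - μ) * F y + μ * F w := by gcongr <;> exact hqF _

lemma convexOn_ite_lt_max (hq : ConvexOn ℝ univ q) (hτ : ConvexOn ℝ {r | q r < b} τ)
    (hab : a < b) (hτa : ∀ r, q r < b → τ r ≤ a) :
    ConvexOn ℝ univ fun r ↦ if q r < b then max (τ r) (q r) else q r := by
  set F : ℝ → ℝ := fun r ↦ if q r < b then max (τ r) (q r) else q r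
  have hqF : ∀ r, q r ≤ F r := fun r ↦ by grind
  have hFq : ∀ r, a ≤ q r → F r = q r := fun r hr ↦ by grind
  have hFS : ConvexOn ℝ {r | q r < b} F :=
    (hτ.sup (hq.subset (subset_univ _) hτ.1)).congr fun r hr ↦ (if_pos hr).symm
  refine convexOn_of_slope_mono_adjacent convex_univ fun {x y z} _ _ hxy hyz ↦ ?_
  have : 0 < y - x := sub_pos.2 hxy
  have : 0 < z - y := sub_pos.2 hyz
  rcases le_or_gt a (q y) with hy | hy
  · calc (F y - F x) / (y - x) ≤ (q y - q x) / (y - x) := by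
          rw [hFq y hy]; gcongr; exact hqF x
      _ ≤ (q z - q y) / (z - y) := hq.slope_mono_adjacent (mem_univ _) (mem_univ _) hxy hyz
      _ ≤ (F z - F y) / (z - y) := by
          rw [hFq y hy]; gcongr; exact hqF z
  obtain ⟨μ, hμ, hqμ, hFμ⟩ := exists_le_combo_of_lt hq hab hqF hFq hy x
  obtain ⟨ν, hν, hqν, hFν⟩ := exists_le_combo_of_lt hq hab hqF hFq hy z
  have hslope := hFS.slope_mono_adjacent hqμ hqν (y := y) (by nlinarith [hμ.1])
    (by nlinarith [hν.1])
  calc (F y - F x) / (y - x) = μ * (F y - F x) / (μ * (y - x)) :=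
        (mul_div_mul_left _ _ hμ.1.ne').symm
    _ ≤ (F y - F (y + μ * (x - y))) / (y - (y + μ * (x - y))) := by
        rw [show y - (y + μ * (x - y)) = μ * (y - x) by ring]
        have := hμ.1
        gcongr
        linarith
    _ ≤ (F (y + ν * (z - y)) - F y) / (y + ν * (z - y) - y) := hslope
    _ ≤ ν * (F z - F y) / (ν * (z - y)) := by
        rw [add_sub_cancel_left]
        have := hν.1
        gcongr
        linarith
    _ = (F z - F y) / (z - y) := mul_div_mul_left _ _ hν.1.ne'

variable {N n : ℕ} {U E : Set (Mat N n)} {T : Mat N n → ℝ}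

/-- A function that is rank one convex merely on `U` is extended to all matrices by a globally rank
one convex function that is large off `U`. -/
lemma RankOneConvexOn.nonpos_of_mem_RcoF (hT : RankOneConvexOn U T) (hU : IsOpen U)
    (hE : Bornology.IsBounded E) (hEU : RcoF E ⊆ U) (hbdd : BddAbove (T '' U))
    (hTE : ∀ η ∈ E, T η ≤ 0) {ξ : Mat N n} (hξ : ξ ∈ RcoF E) : T ξ ≤ 0 := by
  obtain ⟨D, hD⟩ := hbdd
  obtain ⟨g, hg, hgE, hgU⟩ := exists_rankOneConvexFun_forall_notMem_le hE hU hEU (|D| + 1)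
  have hmemU : ∀ η, g η < |D| + 1 → η ∈ U := fun η hη ↦ by
    by_contra h
    exact hη.not_ge (hgU η h)
  have hglue : RankOneConvexFun fun η ↦ if g η < |D| + 1 then max (T η) (g η) else g η := by
    rw [rankOneConvexFun_iff_convexOn_line] at hg ⊢
    intro η v hv
    have hline := hg η v hv
    have hS : Convex ℝ {r : ℝ | g (η + r • v) < |D| + 1} := by
      simpa using hline.convex_lt (|D| + 1)
    exact convexOn_ite_lt_max hline (hT.convexOn_line hv hS fun r hr ↦ hmemU _ hr)
      (lt_add_one |D|)
      fun r hr ↦ (hD (mem_image_of_mem T (hmemU _ hr))).trans (le_abs_self D)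
  have hnonpos := hξ _ hglue fun η hη ↦ by
    have := hgE η hη
    have := hTE η hη
    grind
  have hgξ : g ξ < |D| + 1 := (hξ g hg hgE).trans_lt (by positivity)
  rw [if_pos hgξ] at hnonpos
  exact (le_max_left _ _).trans hnonpos

end Gluing

section AffineGerm

variable {N n : ℕ} {u v : (Fin n → ℝ) → Fin N → ℝ} {A B : Mat N n} {b c : Fin N → ℝ}
  {x : Fin n → ℝ} {Ω : Set (Fin n → ℝ)}

/-- `u` coincides with the affine map `y ↦ A y + b` in a neighbourhood of `x`. -/
def HasAffineGerm (u : (Fin n → ℝ) → Fin N → ℝ) (A : Mat N n) (b : Fin N → ℝ)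
    (x : Fin n → ℝ) : Prop :=
  u =ᶠ[nhds x] fun y ↦ A.mulVec y + b

namespace HasAffineGerm

lemma matGrad_eq (h : HasAffineGerm u A b x) : matGrad u x = A := by
  have haff : HasFDerivAt (fun y ↦ A.mulVec y + b) (Matrix.toLin' A).toContinuousLinearMap x :=
    (Matrix.toLin' A).toContinuousLinearMap.hasFDerivAt.add_const b
  rw [matGrad, (haff.congr_of_eventuallyEq h).fderiv]
  exact LinearMap.toMatrix'_toLin' A

lemma unique (hA : HasAffineGerm u A b x) (hB : HasAffineGerm u B c x) : (A, b) = (B, c) := by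
  obtain rfl : A = B := hA.matGrad_eq.symm.trans hB.matGrad_eq
  rw [add_left_cancel (hA.eq_of_nhds.symm.trans hB.eq_of_nhds)]

end HasAffineGerm

/-- The set of points of `Ω` near which `u` is the affine map `y ↦ p.1 y + p.2`. -/
def affinePiece (u : (Fin n → ℝ) → Fin N → ℝ) (Ω : Set (Fin n → ℝ))
    (p : Mat N n × (Fin N → ℝ)) : Set (Fin n → ℝ) :=
  {x ∈ Ω | HasAffineGerm u p.1 p.2 x}

lemma affinePiece_subset (p : Mat N n × (Fin N → ℝ)) : affinePiece u Ω p ⊆ Ω := sep_subset _ _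

lemma eq_of_mem_affinePiece {p : Mat N n × (Fin N → ℝ)} (hx : x ∈ affinePiece u Ω p) :
    u x = p.1.mulVec x + p.2 :=
  hx.2.eq_of_nhds

lemma isOpen_affinePiece (hΩ : IsOpen Ω) (p : Mat N n × (Fin N → ℝ)) :
    IsOpen (affinePiece u Ω p) :=
  hΩ.inter isOpen_setOfPred_eventually_nhds

lemma pairwise_disjoint_affinePiece :
    Pairwise (Function.onFun Disjoint (affinePiece u Ω)) := fun _ _ hpq ↦
  disjoint_left.2 fun _ hp hq ↦ hpq (hp.2.unique hq.2)

end AffineGerm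

section Patch

variable {ι X Y : Type*} {P : ι → Set X} {v : ι → X → Y} {u₀ : X → Y} {x : X}

/-- The map equal to `v i` on each of the disjoint sets `P i` and to `u₀` elsewhere. -/
noncomputable def patch (P : ι → Set X) (v : ι → X → Y) (u₀ : X → Y) (x : X) : Y :=
  if h : ∃ i, x ∈ P i then v h.choose x else u₀ x

lemma patch_of_mem (hP : Pairwise (Function.onFun Disjoint P)) {i : ι} (hx : x ∈ P i) :
    patch P v u₀ x = v i x := by
  have h : ∃ i, x ∈ P i := ⟨i, hx⟩
  rw [patch, dif_pos h, hP.eq (not_disjoint_iff.2 ⟨x, h.choose_spec, hx⟩)]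

lemma patch_of_notMem (hx : ∀ i, x ∉ P i) : patch P v u₀ x = u₀ x :=
  dif_neg (not_exists.2 hx)

lemma inter_frontier_nonempty_of_isPreconnected [TopologicalSpace X] {s t : Set X}
    (hs : IsPreconnected s) (ht : IsOpen t) (hst : (s ∩ t).Nonempty) (hst' : (s \ t).Nonempty) :
    (s ∩ frontier t).Nonempty := by
  by_contra hempty
  have hdisj : Disjoint (frontier t) s :=
    disjoint_iff_inter_eq_empty.2 (inter_comm s _ ▸ not_nonempty_iff_eq_empty.1 hempty)
  obtain ⟨x, hxs, hxt⟩ := hst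
  obtain ⟨y, hys, hyt⟩ := hst'
  have := isPreconnected_iff_preconnectedSpace.1 hs
  have huniv := (isClopen_preimage_val ht hdisj).eq_univ ⟨⟨x, hxs⟩, hxt⟩
  exact hyt (huniv.ge (mem_univ ⟨y, hys⟩))

lemma exists_mem_segment_patch_dist_le [NormedAddCommGroup X] [NormedSpace ℝ X]
    [PseudoMetricSpace Y] {L : NNReal} (hP : ∀ i, IsOpen (P i))
    (hd : Pairwise (Function.onFun Disjoint P)) (hv : ∀ i, LipschitzWith L (v i))
    (hfr : ∀ i, ∀ x ∈ frontier (P i), v i x = u₀ x) (x : X) {y : X}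
    (hxy : ∀ i, x ∈ P i → y ∉ P i) :
    ∃ z ∈ segment ℝ x y, (∀ i, z ∉ P i) ∧
      dist (patch P v u₀ x) (patch P v u₀ z) ≤ L * dist x z := by
  by_cases hx : ∀ i, x ∉ P i
  · exact ⟨x, left_mem_segment ℝ x y, hx, by simp⟩
  obtain ⟨i, hi⟩ : ∃ i, x ∈ P i := by simpa using hx
  obtain ⟨z, hz, hzi⟩ := inter_frontier_nonempty_of_isPreconnected
    (convex_segment x y).isPreconnected (hP i)
      ⟨x, left_mem_segment ℝ x y, hi⟩ ⟨y, right_mem_segment ℝ x y, hxy i hi⟩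
  have hzP : ∀ j, z ∉ P j := by
    intro j hj
    rcases eq_or_ne i j with rfl | hij
    · exact ((hP i).frontier_eq ▸ hzi).2 hj
    · exact disjoint_left.1 ((hd hij).closure_left (hP j)) hzi.1 hj
  refine ⟨z, hz, hzP, ?_⟩
  rw [patch_of_mem hd hi, patch_of_notMem hzP, ← hfr i z hzi]
  exact (hv i).dist_le_mul x z

lemma lipschitzWith_patch [NormedAddCommGroup X] [NormedSpace ℝ X] [PseudoMetricSpace Y]
    {L : NNReal} (hP : ∀ i, IsOpen (P i)) (hd : Pairwise (Function.onFun Disjoint P))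
    (hu₀ : LipschitzWith L u₀) (hv : ∀ i, LipschitzWith L (v i))
    (hfr : ∀ i, ∀ x ∈ frontier (P i), v i x = u₀ x) : LipschitzWith L (patch P v u₀) := by
  refine LipschitzWith.of_dist_le_mul fun x y ↦ ?_
  by_cases hxy : ∃ i, x ∈ P i ∧ y ∈ P i
  · obtain ⟨i, hx, hy⟩ := hxy
    rw [patch_of_mem hd hx, patch_of_mem hd hy]
    exact (hv i).dist_le_mul x y
  obtain ⟨z, hz, hzP, hxz⟩ :=
    exists_mem_segment_patch_dist_le hP hd hv hfr x fun i hi hi' ↦ hxy ⟨i, hi, hi'⟩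
  obtain ⟨w, hw, hwP, hyw⟩ :=
    exists_mem_segment_patch_dist_le hP hd hv hfr y (y := z) fun i _ hi ↦ hzP i hi
  have hzw : dist (patch P v u₀ z) (patch P v u₀ w) ≤ L * dist z w := by
    rw [patch_of_notMem hzP, patch_of_notMem hwP]
    exact hu₀.dist_le_mul z w
  calc dist (patch P v u₀ x) (patch P v u₀ y)
      ≤ dist (patch P v u₀ x) (patch P v u₀ z) + dist (patch P v u₀ z) (patch P v u₀ w)
        + dist (patch P v u₀ w) (patch P v u₀ y) := dist_triangle4 _ _ _ _
    _ ≤ L * dist x z + L * dist z w + L * dist y w := by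
        rw [dist_comm (patch P v u₀ w)]
        gcongr
    _ = L * (dist x z + (dist y w + dist w z)) := by
        rw [dist_comm z w]
        ring
    _ = L * dist x y := by
        rw [dist_add_dist_of_mem_segment hw, dist_comm y, dist_add_dist_of_mem_segment hz]

end Patch

section Admissible

open scoped ENNReal NNReal

variable {N n : ℕ} {U E : Set (Mat N n)} {L : ℝ≥0} {Ω : Set (Fin n → ℝ)}
  {w u : (Fin n → ℝ) → Fin N → ℝ} {ξ : Mat N n} {b : Fin N → ℝ}

/-- Admissible competitors for the boundary datum `w`: `L`-Lipschitz maps equal to `w` off `Ω` that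
near almost every point of `Ω` are affine with gradient in `U`. -/
structure IsAdmissible (U : Set (Mat N n)) (L : ℝ≥0) (Ω : Set (Fin n → ℝ))
    (w u : (Fin n → ℝ) → Fin N → ℝ) : Prop where
  lipschitzWith : LipschitzWith L u
  eq_of_notMem : ∀ x ∉ Ω, u x = w x
  exists_hasAffineGerm : ∀ᵐ x ∂volume.restrict Ω, ∃ A ∈ U, ∃ b, HasAffineGerm u A b x

/-- The affine maps `y ↦ p.1 y + p.2` with gradient in `U` that `u` coincides with somewhere. -/
def affinePieceIndex (U : Set (Mat N n)) (u : (Fin n → ℝ) → Fin N → ℝ) (Ω : Set (Fin n → ℝ)) :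
    Set (Mat N n × (Fin N → ℝ)) :=
  {p | p.1 ∈ U ∧ (affinePiece u Ω p).Nonempty}

lemma countable_affinePieceIndex (hΩ : IsOpen Ω) : (affinePieceIndex U u Ω).Countable :=
  (pairwise_disjoint_affinePiece.pairwiseDisjoint _).countable_of_isOpen
    (fun p _ ↦ isOpen_affinePiece hΩ p) fun _ hp ↦ hp.2

lemma pairwise_disjoint_affinePieceIndex : Pairwise (Function.onFun Disjoint
    fun p : affinePieceIndex U u Ω ↦ affinePiece u Ω p.1) :=
  pairwise_disjoint_affinePiece.comp_of_injective Subtype.val_injective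

namespace IsAdmissible

lemma mem_of_matGrad (hu : IsAdmissible U L Ω w u) :
    ∀ᵐ x ∂volume.restrict Ω, matGrad u x ∈ U := by
  filter_upwards [hu.exists_hasAffineGerm] with x ⟨A, hA, b, h⟩
  rwa [h.matGrad_eq]

lemma iUnion_affinePiece_ae_eq (hu : IsAdmissible U L Ω w u) (hΩ : IsOpen Ω) :
    (⋃ p : affinePieceIndex U u Ω, affinePiece u Ω p.1 : Set (Fin n → ℝ)) =ᵐ[volume] Ω := by
  have hsub : (⋃ p : affinePieceIndex U u Ω, affinePiece u Ω p.1 : Set (Fin n → ℝ)) ⊆ Ω :=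
    iUnion_subset fun p ↦ affinePiece_subset p.1
  refine (LE.le.eventuallyLE hsub).antisymm ?_
  filter_upwards [(ae_restrict_iff' hΩ.measurableSet).1 hu.exists_hasAffineGerm] with x hx hxΩ
  obtain ⟨A, hA, b, h⟩ := hx hxΩ
  exact mem_iUnion.2 ⟨⟨(A, b), hA, x, hxΩ, h⟩, hxΩ, h⟩

lemma setLIntegral_eq_tsum (hu : IsAdmissible U L Ω w u) (hΩ : IsOpen Ω)
    (f : (Fin n → ℝ) → ℝ≥0∞) :
    ∫⁻ x in Ω, f x = ∑' p : affinePieceIndex U u Ω, ∫⁻ x in affinePiece u Ω p.1, f x := by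
  have := (countable_affinePieceIndex (U := U) (u := u) hΩ).to_subtype
  rw [← Measure.restrict_congr_set (hu.iUnion_affinePiece_ae_eq hΩ)]
  have hmeas (p : affinePieceIndex U u Ω) : MeasurableSet (affinePiece u Ω p.1) :=
    (isOpen_affinePiece hΩ p.1).measurableSet
  exact lintegral_iUnion hmeas pairwise_disjoint_affinePieceIndex f

lemma setLIntegral_matGrad_eq_tsum (hu : IsAdmissible U L Ω w u) (hΩ : IsOpen Ω)
    (σ : Mat N n → ℝ≥0∞) :
    ∫⁻ x in Ω, σ (matGrad u x) =
      ∑' p : affinePieceIndex U u Ω, σ p.1.1 * volume (affinePiece u Ω p.1) := by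
  rw [hu.setLIntegral_eq_tsum hΩ]
  refine tsum_congr fun p ↦ ?_
  have hp : MeasurableSet (affinePiece u Ω p.1) := (isOpen_affinePiece hΩ p.1).measurableSet
  rw [← setLIntegral_const]
  exact setLIntegral_congr_fun hp fun x hx ↦ by rw [hx.2.matGrad_eq]

lemma piecewiseAffineOn (hu : IsAdmissible U L Ω w u) (hΩ : IsOpen Ω) :
    PiecewiseAffineOn u Ω := by
  have := (countable_affinePieceIndex (U := U) (u := u) hΩ).toEncodable
  refine ⟨hu.lipschitzWith.continuous.continuousOn,
    fun k ↦ ⋃ p ∈ Encodable.decode₂ (affinePieceIndex U u Ω) k, affinePiece u Ω p.1,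
    fun k ↦ isOpen_biUnion fun p _ ↦ isOpen_affinePiece hΩ p.1,
    fun k ↦ iUnion₂_subset fun p _ ↦ affinePiece_subset p.1,
    fun k l hkl ↦ Encodable.iUnion_decode₂_disjoint_on pairwise_disjoint_affinePieceIndex hkl,
    ?_, fun k ↦ ?_⟩
  · rw [Encodable.iUnion_decode₂]
    exact ae_le_set.1 (hu.iUnion_affinePiece_ae_eq hΩ).symm.le
  · exact Encodable.iUnion_decode₂_cases (C := AffineOn u) ⟨0, 0, by simp⟩
      fun p ↦ ⟨p.1.1, p.1.2, fun x hx ↦ eq_of_mem_affinePiece hx⟩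

end IsAdmissible

lemma isAdmissible_affine (hξ : ξ ∈ U) (hL : LipschitzWith L ξ.mulVec) (b : Fin N → ℝ) :
    IsAdmissible U L Ω (fun x ↦ ξ.mulVec x + b) fun x ↦ ξ.mulVec x + b where
  lipschitzWith := by simpa using hL.add (LipschitzWith.const b)
  eq_of_notMem _ _ := rfl
  exists_hasAffineGerm := .of_forall fun _ ↦ ⟨ξ, hξ, b, .rfl⟩

/-- `s` is an upper bound for the mean distance of the gradient to `E` that can be reached, up to
an arbitrarily small error, by admissible maps uniformly close to an affine map of gradient `ξ`. -/
def RelaxationBound (U E : Set (Mat N n)) (L : ℝ≥0) (ξ : Mat N n) (s : ℝ≥0∞) : Prop :=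
  ∀ Ω : Set (Fin n → ℝ), IsOpen Ω → Bornology.IsBounded Ω → ∀ b : Fin N → ℝ, ∀ ε : ℝ≥0, 0 < ε →
    ∃ u, IsAdmissible U L Ω (fun x ↦ ξ.mulVec x + b) u ∧
      (∀ x, dist (u x) (ξ.mulVec x + b) ≤ ε) ∧
      ∫⁻ x in Ω, ENNReal.ofReal (infDist (matGrad u x) E) ≤ s * volume Ω + ε

/-- The relaxation of the distance to `E`: the least mean distance of the gradient to `E` that
admissible maps close to an affine map of gradient `ξ` can approach. -/
noncomputable def relaxedDist (U E : Set (Mat N n)) (L : ℝ≥0) (ξ : Mat N n) : ℝ≥0∞ :=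
  sInf {s | RelaxationBound U E L ξ s}

lemma relaxedDist_le_infDist (hξ : ξ ∈ U) (hL : LipschitzWith L ξ.mulVec) :
    relaxedDist U E L ξ ≤ ENNReal.ofReal (infDist ξ E) := by
  refine sInf_le fun Ω _ _ b ε _ ↦ ⟨_, isAdmissible_affine hξ hL b, fun x ↦ by simp, ?_⟩
  simp only [(show HasAffineGerm (fun x ↦ ξ.mulVec x + b) ξ b _ from .rfl).matGrad_eq]
  simp

lemma relaxationBound_relaxedDist (hξ : relaxedDist U E L ξ ≠ ∞) :
    RelaxationBound U E L ξ (relaxedDist U E L ξ) := by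
  intro Ω hΩ hΩb b ε hε
  obtain ⟨δ, hδ, hδΩ⟩ := ENNReal.exists_nnreal_pos_mul_lt (hΩb.measure_lt_top (μ := volume)).ne
    (ENNReal.coe_pos.2 (half_pos hε)).ne'
  obtain ⟨s, hs, hsδ⟩ := sInf_lt_iff.1 (ENNReal.lt_add_right hξ (ENNReal.coe_pos.2 hδ).ne')
  obtain ⟨u, hu, huε, hcost⟩ := hs Ω hΩ hΩb b (ε / 2) (half_pos hε)
  refine ⟨u, hu, fun x ↦ (huε x).trans (by simp), hcost.trans ?_⟩
  calc s * volume Ω + (ε / 2 : ℝ≥0)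
      ≤ (relaxedDist U E L ξ + δ) * volume Ω + (ε / 2 : ℝ≥0) := by gcongr; exact hsδ.le
    _ ≤ relaxedDist U E L ξ * volume Ω + ((ε / 2 : ℝ≥0) + (ε / 2 : ℝ≥0)) := by
        rw [add_mul, add_assoc]
        gcongr
    _ = relaxedDist U E L ξ * volume Ω + ε := by rw [← ENNReal.coe_add, add_halves]

lemma IsAdmissible.patch {v : affinePieceIndex U u Ω → (Fin n → ℝ) → Fin N → ℝ}
    (hu : IsAdmissible U L Ω w u) (hΩ : IsOpen Ω)
    (hv : ∀ p, IsAdmissible U L (affinePiece u Ω p.1) (fun x ↦ p.1.1.mulVec x + p.1.2) (v p)) :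
    IsAdmissible U L Ω w
      (patch (fun p : affinePieceIndex U u Ω ↦ affinePiece u Ω p.1) v u) where
  lipschitzWith := by
    refine lipschitzWith_patch (fun p ↦ isOpen_affinePiece hΩ p.1)
      pairwise_disjoint_affinePieceIndex hu.lipschitzWith (fun p ↦ (hv p).lipschitzWith)
      fun p x hx ↦ ?_
    rw [(isOpen_affinePiece hΩ p.1).frontier_eq] at hx
    rw [(hv p).eq_of_notMem x hx.2]
    have hclosed : IsClosed {x | p.1.1.mulVec x + p.1.2 = u x} :=
      isClosed_eq (by fun_prop) hu.lipschitzWith.continuous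
    exact closure_minimal (fun y hy ↦ (eq_of_mem_affinePiece hy).symm) hclosed hx.1
  eq_of_notMem x hx := by
    rw [patch_of_notMem fun p hp ↦ hx (affinePiece_subset p.1 hp), hu.eq_of_notMem x hx]
  exists_hasAffineGerm := by
    have := (countable_affinePieceIndex (U := U) (u := u) hΩ).to_subtype
    rw [← Measure.restrict_congr_set (hu.iUnion_affinePiece_ae_eq hΩ), ae_restrict_iUnion_iff]
    intro p
    have hopen := isOpen_affinePiece (u := u) hΩ p.1
    filter_upwards [(hv p).exists_hasAffineGerm, ae_restrict_mem hopen.measurableSet]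
      with x ⟨A, hA, b, hgerm⟩ hx
    refine ⟨A, hA, b, EventuallyEq.trans ?_ hgerm⟩
    filter_upwards [hopen.mem_nhds hx] with y hy
    exact patch_of_mem pairwise_disjoint_affinePieceIndex hy

lemma setLIntegral_matGrad_patch {ι : Type*} {P : ι → Set (Fin n → ℝ)}
    {v : ι → (Fin n → ℝ) → Fin N → ℝ} (hP : ∀ i, IsOpen (P i))
    (hd : Pairwise (Function.onFun Disjoint P)) (σ : Mat N n → ℝ≥0∞) (i : ι) :
    ∫⁻ x in P i, σ (matGrad (patch P v u) x) = ∫⁻ x in P i, σ (matGrad (v i) x) := by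
  refine setLIntegral_congr_fun (hP i).measurableSet fun x hx ↦ ?_
  have hgerm : patch P v u =ᶠ[nhds x] v i := by
    filter_upwards [(hP i).mem_nhds hx] with y hy using patch_of_mem hd hy
  simp only [matGrad, hgerm.fderiv_eq]

lemma IsAdmissible.exists_setLIntegral_infDist_le (hU : ∀ A ∈ U, relaxedDist U E L A ≠ ∞)
    (hΩ : IsOpen Ω) (hΩb : Bornology.IsBounded Ω) (hu : IsAdmissible U L Ω w u) {ε : ℝ≥0}
    (hε : 0 < ε) :
    ∃ v, IsAdmissible U L Ω w v ∧ (∀ x, dist (v x) (u x) ≤ ε) ∧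
      ∫⁻ x in Ω, ENNReal.ofReal (infDist (matGrad v x) E) ≤
        (∫⁻ x in Ω, relaxedDist U E L (matGrad u x)) + ε := by
  have := (countable_affinePieceIndex (U := U) (u := u) hΩ).to_subtype
  have hopen := fun p : affinePieceIndex U u Ω ↦ isOpen_affinePiece (u := u) hΩ p.1
  have hdisj := pairwise_disjoint_affinePieceIndex (U := U) (u := u) (Ω := Ω)
  obtain ⟨δ, hδ, hδε⟩ := ENNReal.exists_pos_sum_of_countable (ENNReal.coe_pos.2 hε).ne'
    (affinePieceIndex U u Ω)
  choose v hv hvδ hcost using fun p : affinePieceIndex U u Ω ↦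
    relaxationBound_relaxedDist (hU _ p.2.1) _ (hopen p) (hΩb.subset (affinePiece_subset p.1))
      p.1.2 (min (δ p) ε) (lt_min (hδ p) hε)
  refine ⟨_, hu.patch hΩ hv, fun x ↦ ?_, ?_⟩
  · by_cases hx : ∃ p : affinePieceIndex U u Ω, x ∈ affinePiece u Ω p.1
    · obtain ⟨p, hp⟩ := hx
      rw [patch_of_mem hdisj hp, eq_of_mem_affinePiece hp]
      exact (hvδ p x).trans (mod_cast min_le_right _ _)
    · rw [patch_of_notMem (not_exists.1 hx), dist_self]
      exact ε.2
  · rw [hu.setLIntegral_eq_tsum hΩ]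
    calc ∑' p : affinePieceIndex U u Ω, _
        = ∑' p : affinePieceIndex U u Ω, ∫⁻ x in affinePiece u Ω p.1,
            ENNReal.ofReal (infDist (matGrad (v p) x) E) :=
          tsum_congr fun p ↦ setLIntegral_matGrad_patch hopen hdisj
            (fun A ↦ ENNReal.ofReal (infDist A E)) p
      _ ≤ ∑' p : affinePieceIndex U u Ω,
            (relaxedDist U E L p.1.1 * volume (affinePiece u Ω p.1) + δ p) :=
          ENNReal.tsum_le_tsum fun p ↦ (hcost p).trans (by gcongr; exact min_le_left _ _)
      _ ≤ (∫⁻ x in Ω, relaxedDist U E L (matGrad u x)) + ε := by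
          rw [ENNReal.tsum_add, hu.setLIntegral_matGrad_eq_tsum hΩ]
          gcongr

lemma hasRelaxationProperty_of_relaxedDist_eq_zero (h : ∀ ξ ∈ U, relaxedDist U E L ξ = 0) :
    HasRelaxationProperty U E := by
  intro Ω hΩ hΩb ξ hξ b
  have hbound : RelaxationBound U E L ξ 0 := by
    rw [← h ξ hξ]
    exact relaxationBound_relaxedDist (by simp [h ξ hξ])
  choose u hu hdist hcost using fun ν : ℕ ↦
    hbound Ω hΩ hΩb b (1 / (ν + 1)) (by positivity)
  have hlim : Tendsto (fun ν : ℕ ↦ 1 / ((ν : ℝ) + 1)) atTop (nhds 0) :=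
    tendsto_one_div_add_atTop_nhds_zero_nat
  refine ⟨u, fun ν ↦ (hu ν).piecewiseAffineOn hΩ,
    fun ν ↦ ⟨⟨L, (hu ν).lipschitzWith.lipschitzOnWith⟩,
      fun x hx ↦ (hu ν).eq_of_notMem x (hΩ.frontier_eq ▸ hx).2⟩,
    fun ν ↦ (hu ν).mem_of_matGrad.mono fun _ ↦ Or.inr,
    ⟨L, fun ν ↦ (hu ν).lipschitzWith.lipschitzOnWith⟩, ?_, ?_⟩
  · refine Metric.tendstoUniformlyOn_iff.2 fun ε hε ↦ ?_
    filter_upwards [hlim.eventually_lt_const hε] with ν hν x _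
    rw [dist_comm]
    exact (hdist ν x).trans_lt (by simpa using hν)
  · refine squeeze_zero_norm (fun ν ↦ (norm_integral_le_lintegral_norm _).trans ?_) hlim
    refine ENNReal.toReal_le_of_le_ofReal (by positivity) ?_
    simpa only [Real.norm_of_nonneg infDist_nonneg, zero_mul, zero_add, ← ENNReal.ofReal_coe_nnreal,
      NNReal.coe_div, NNReal.coe_one, NNReal.coe_add, NNReal.coe_natCast] using hcost ν

end Admissible

section Sawtooth

open scoped ENNReal NNReal

/-- The `1`-periodic function vanishing at the integers, of slope `1 - l` on `[0, l]` and `-l` on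
`[l, 1]`. -/
noncomputable def saw (l t : ℝ) : ℝ := min ((1 - l) * Int.fract t) (l * (1 - Int.fract t))

variable {l t : ℝ}

lemma saw_of_fract_le (h : Int.fract t ≤ l) : saw l t = (1 - l) * (t - ⌊t⌋) := by
  rw [saw, min_eq_left (by linarith), Int.self_sub_floor]

lemma saw_of_lt_fract (h : l < Int.fract t) : saw l t = l * (⌊t⌋ + 1 - t) := by
  rw [saw, min_eq_right (by linarith), Int.fract]
  ring

lemma saw_nonneg (hl : l ∈ Icc 0 1) (t : ℝ) : 0 ≤ saw l t :=
  le_min (mul_nonneg (sub_nonneg.2 hl.2) (Int.fract_nonneg t))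
    (mul_nonneg hl.1 (sub_nonneg.2 (Int.fract_lt_one t).le))

lemma saw_le_one (hl : l ∈ Icc 0 1) (t : ℝ) : saw l t ≤ 1 :=
  (min_le_right _ _).trans
    (mul_le_one₀ hl.2 (sub_nonneg.2 (Int.fract_lt_one t).le) (by linarith [Int.fract_nonneg t]))

lemma saw_le_max (hl : l ∈ Icc 0 1) (t : ℝ) (k : ℤ) :
    saw l t ≤ max ((1 - l) * (t - k)) (l * (k - t)) := by
  rcases le_or_gt k ⌊t⌋ with hk | hk
  · have hk' : (k : ℝ) ≤ ⌊t⌋ := mod_cast hk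
    refine le_max_of_le_left ((min_le_left _ _).trans ?_)
    exact mul_le_mul_of_nonneg_left (by rw [Int.fract]; linarith) (sub_nonneg.2 hl.2)
  · have hk' : (⌊t⌋ : ℝ) + 1 ≤ k := mod_cast hk
    refine le_max_of_le_right ((min_le_right _ _).trans ?_)
    exact mul_le_mul_of_nonneg_left (by rw [Int.fract]; linarith) hl.1

lemma lipschitzWith_saw (hl : l ∈ Icc 0 1) : LipschitzWith 1 (saw l) := by
  refine LipschitzWith.of_le_add fun s t ↦ ?_
  rw [Real.dist_eq]
  have hle := le_abs_self (s - t)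
  have hge := neg_abs_le (s - t)
  have h0 := hl.1
  have h1 := hl.2
  rcases le_or_gt (Int.fract t) l with ht | ht
  · rw [saw_of_fract_le ht]
    have h := Int.fract_nonneg t
    rw [Int.fract] at h
    exact (saw_le_max hl s ⌊t⌋).trans (max_le (by nlinarith) (by nlinarith))
  · rw [saw_of_lt_fract ht]
    have h := (Int.fract_lt_one t).le
    rw [Int.fract] at h
    have := saw_le_max hl s (⌊t⌋ + 1)
    push_cast at this
    exact this.trans (max_le (by nlinarith) (by nlinarith))

lemma setLIntegral_ite_fract_le (hl : l ∈ Ioo 0 1) (s r : ℝ≥0∞) :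
    ∫⁻ t in Ioc (0 : ℝ) 1, (if Int.fract t ≤ l then s else r) =
      ENNReal.ofReal l * s + ENNReal.ofReal (1 - l) * r := by
  have hleft : ∫⁻ t in Ioc 0 l, (if Int.fract t ≤ l then s else r) = ENNReal.ofReal l * s := by
    rw [setLIntegral_congr_fun (g := fun _ ↦ s) measurableSet_Ioc fun t ht ↦ ?_]
    · simp [mul_comm]
    · exact if_pos ((Int.fract_eq_self.2 ⟨ht.1.le, ht.2.trans_lt hl.2⟩).trans_le ht.2)
  have hright : ∫⁻ t in Ioc l 1, (if Int.fract t ≤ l then s else r) =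
      ENNReal.ofReal (1 - l) * r := by
    rw [← setLIntegral_congr Ioo_ae_eq_Ioc,
      setLIntegral_congr_fun (g := fun _ ↦ r) measurableSet_Ioo fun t ht ↦ ?_]
    · simp [mul_comm]
    · exact if_neg (by rw [Int.fract_eq_self.2 ⟨(hl.1.trans ht.1).le, ht.2⟩]; exact ht.1.not_ge)
  rw [← Ioc_union_Ioc_eq_Ioc hl.1.le hl.2.le, lintegral_union measurableSet_Ioc
    (Ioc_disjoint_Ioc_of_le le_rfl), hleft, hright]

lemma setLIntegral_comp_add_left_of_periodic {f : ℝ → ℝ≥0∞} (hf : Function.Periodic f 1)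
    (y : ℝ) : ∫⁻ τ in Ioc (0 : ℝ) 1, f (y + τ) = ∫⁻ t in Ioc (0 : ℝ) 1, f t := by
  calc ∫⁻ τ in Ioc (0 : ℝ) 1, f (y + τ) = ∫⁻ t in Ioc y (y + 1), f t := by
        have := (measurePreserving_add_left (volume : Measure ℝ) y).setLIntegral_comp_preimage_emb
          (measurableEmbedding_addLeft y) f (Ioc y (y + 1))
        simpa using this
    _ = ∫⁻ t in Ioc (0 : ℝ) (0 + 1), f t :=
        (isAddFundamentalDomain_Ioc one_pos y).setLIntegral_eq
          (isAddFundamentalDomain_Ioc one_pos 0) f hf.map_vadd_zmultiples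
    _ = ∫⁻ t in Ioc (0 : ℝ) 1, f t := by rw [zero_add]

lemma exists_lintegral_comp_add_le_of_periodic {α : Type*} [MeasurableSpace α] {μ : Measure α}
    [SFinite μ] {f : ℝ → ℝ≥0∞} (hf : Function.Periodic f 1) (hfm : Measurable f) {y : α → ℝ}
    (hy : Measurable y) :
    ∃ τ, ∫⁻ x, f (y x + τ) ∂μ ≤ (∫⁻ t in Ioc (0 : ℝ) 1, f t) * μ univ := by
  have hm : Measurable fun p : ℝ × α ↦ f (y p.2 + p.1) :=
    hfm.comp ((hy.comp measurable_snd).add measurable_fst)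
  have : IsProbabilityMeasure (volume.restrict (Ioc (0 : ℝ) 1)) := ⟨by simp⟩
  obtain ⟨τ, hτ⟩ := exists_le_lintegral (μ := volume.restrict (Ioc (0 : ℝ) 1))
    (f := fun τ ↦ ∫⁻ x, f (y x + τ) ∂μ) hm.lintegral_prod_right.aemeasurable
  refine ⟨τ, hτ.trans_eq ?_⟩
  rw [lintegral_lintegral_swap hm.aemeasurable]
  simp only [setLIntegral_comp_add_left_of_periodic hf, lintegral_const]

end Sawtooth

section AffineSelection

variable {n : ℕ} {Z Z₁ Z₂ : Set ((Fin n → ℝ) × ℝ)} {Ω : Set (Fin n → ℝ)}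
  {φ ψ : (Fin n → ℝ) → ℝ}

/-- At each point of `Ω` the function `φ` takes the value of one of the affine functions
`y ↦ p.1 ⬝ᵥ y + p.2` with `p ∈ Z`. -/
def IsAffineSelection (Z : Set ((Fin n → ℝ) × ℝ)) (Ω : Set (Fin n → ℝ)) (φ : (Fin n → ℝ) → ℝ) :
    Prop :=
  ∀ x ∈ Ω, ∃ p ∈ Z, φ x = p.1 ⬝ᵥ x + p.2

namespace IsAffineSelection

lemma max (hφ : IsAffineSelection Z₁ Ω φ) (hψ : IsAffineSelection Z₂ Ω ψ) :
    IsAffineSelection (Z₁ ∪ Z₂) Ω fun x ↦ Max.max (φ x) (ψ x) := by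
  intro x hx
  obtain ⟨p, hp, hφp⟩ := hφ x hx
  obtain ⟨q, hq, hψq⟩ := hψ x hx
  rcases max_choice (φ x) (ψ x) with h | h
  · exact ⟨p, .inl hp, h.trans hφp⟩
  · exact ⟨q, .inr hq, h.trans hψq⟩

lemma min (hφ : IsAffineSelection Z₁ Ω φ) (hψ : IsAffineSelection Z₂ Ω ψ) :
    IsAffineSelection (Z₁ ∪ Z₂) Ω fun x ↦ Min.min (φ x) (ψ x) := by
  intro x hx
  obtain ⟨p, hp, hφp⟩ := hφ x hx
  obtain ⟨q, hq, hψq⟩ := hψ x hx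
  rcases min_choice (φ x) (ψ x) with h | h
  · exact ⟨p, .inl hp, h.trans hφp⟩
  · exact ⟨q, .inr hq, h.trans hψq⟩

end IsAffineSelection

lemma ae_dotProduct_add_ne {p q : (Fin n → ℝ) × ℝ} (hpq : p ≠ q) :
    ∀ᵐ x : Fin n → ℝ, p.1 ⬝ᵥ x + p.2 ≠ q.1 ⬝ᵥ x + q.2 := by
  let S : AffineSubspace ℝ (Fin n → ℝ) :=
    { carrier := {x | p.1 ⬝ᵥ x + p.2 = q.1 ⬝ᵥ x + q.2}
      smul_vsub_vadd_mem' := by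
        intro c x y z hx hy hz
        simp only [mem_ofPred_eq, vsub_eq_sub, vadd_eq_add, dotProduct_add, dotProduct_smul,
          dotProduct_sub, smul_eq_mul] at *
        linear_combination c * hx - c * hy + hz }
  have hS : S ≠ ⊤ := by
    refine fun hS ↦ hpq ?_
    have hall (x : Fin n → ℝ) : p.1 ⬝ᵥ x + p.2 = q.1 ⬝ᵥ x + q.2 :=
      (hS ▸ AffineSubspace.mem_top ℝ _ x : x ∈ S)
    have h2 : p.2 = q.2 := by simpa using hall 0
    refine Prod.ext (funext fun i ↦ ?_) h2
    simpa [h2] using hall (Pi.single i 1)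
  exact measure_eq_zero_iff_ae_notMem.1 (Measure.addHaar_affineSubspace volume S hS)

lemma IsAffineSelection.ae_eventuallyEq (hφ : IsAffineSelection Z Ω φ) (hZ : Z.Finite)
    (hΩ : IsOpen Ω) (hφc : Continuous φ) :
    ∀ᵐ x ∂volume.restrict Ω, ∀ p ∈ Z, φ x = p.1 ⬝ᵥ x + p.2 →
      φ =ᶠ[nhds x] fun y ↦ p.1 ⬝ᵥ y + p.2 := by
  have hne : ∀ᵐ x : Fin n → ℝ, ∀ p ∈ Z, ∀ q ∈ Z, p ≠ q →
      p.1 ⬝ᵥ x + p.2 ≠ q.1 ⬝ᵥ x + q.2 :=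
    (ae_ball_iff hZ.countable).2 fun p _ ↦ (ae_ball_iff hZ.countable).2 fun q _ ↦
      eventually_imp_distrib_left.2 ae_dotProduct_add_ne
  filter_upwards [ae_restrict_of_ae hne, ae_restrict_mem hΩ.measurableSet] with x hx hxΩ p hp hφp
  have hopen : ∀ᶠ y in nhds x, ∀ q ∈ Z, p ≠ q → φ y ≠ q.1 ⬝ᵥ y + q.2 := by
    refine hZ.eventually_all.2 fun q hq ↦ eventually_imp_distrib_left.2 fun hpq ↦ ?_
    exact (isOpen_ne_fun hφc (by fun_prop)).mem_nhds (hφp.trans_ne (hx p hp q hq hpq))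
  filter_upwards [hopen, hΩ.mem_nhds hxΩ] with y hy hyΩ
  obtain ⟨q, hq, hφq⟩ := hφ y hyΩ
  obtain rfl : p = q := of_not_not fun hpq ↦ hy q hq hpq hφq
  exact hφq

end AffineSelection

section Cutoff

open scoped ENNReal NNReal

variable {n : ℕ} {Ω : Set (Fin n → ℝ)} {K : ℝ≥0} {χ ψ : (Fin n → ℝ) → ℝ}

/-- Nonnegative `K`-Lipschitz functions supported in `Ω` with finitely many affine pieces, all of
slope at most `K`. -/
structure IsCutoff (K : ℝ≥0) (Ω : Set (Fin n → ℝ)) (χ : (Fin n → ℝ) → ℝ) : Prop where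
  lipschitzWith : LipschitzWith K χ
  nonneg : ∀ x, 0 ≤ χ x
  eq_zero : ∀ x ∉ Ω, χ x = 0
  exists_isAffineSelection :
    ∃ Z : Set ((Fin n → ℝ) × ℝ), Z.Finite ∧ (∀ p ∈ Z, ‖p.1‖ ≤ K) ∧ IsAffineSelection Z univ χ

lemma isCutoff_zero : IsCutoff K Ω 0 where
  lipschitzWith := LipschitzWith.const' 0
  nonneg _ := le_rfl
  eq_zero _ _ := rfl
  exists_isAffineSelection := ⟨{0}, finite_singleton 0, by simp, fun _ _ ↦ ⟨0, rfl, by simp⟩⟩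

lemma IsCutoff.max (hχ : IsCutoff K Ω χ) (hψ : IsCutoff K Ω ψ) :
    IsCutoff K Ω fun x ↦ Max.max (χ x) (ψ x) where
  lipschitzWith := by simpa using hχ.lipschitzWith.max hψ.lipschitzWith
  nonneg x := le_max_of_le_left (hχ.nonneg x)
  eq_zero x hx := by rw [hχ.eq_zero x hx, hψ.eq_zero x hx, max_self]
  exists_isAffineSelection := by
    obtain ⟨Z₁, hZ₁, hK₁, h₁⟩ := hχ.exists_isAffineSelection
    obtain ⟨Z₂, hZ₂, hK₂, h₂⟩ := hψ.exists_isAffineSelection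
    exact ⟨Z₁ ∪ Z₂, hZ₁.union hZ₂, fun p hp ↦ hp.elim (hK₁ p) (hK₂ p), h₁.max h₂⟩

lemma exists_isAffineSelection_cone (K : ℝ≥0) (a : Fin n → ℝ) (r : ℝ) :
    ∃ Z : Set ((Fin n → ℝ) × ℝ), Z.Finite ∧ (∀ p ∈ Z, ‖p.1‖ ≤ K) ∧
      IsAffineSelection Z univ fun x ↦ K * (r - ‖x - a‖) := by
  have hnorm (i : Fin n) (s : ℝ) (hs : |s| ≤ K) : ‖(Pi.single i s : Fin n → ℝ)‖ ≤ K := by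
    rwa [Pi.norm_single]
  refine ⟨{(0, K * r)} ∪ range (fun i ↦ (Pi.single i (-K : ℝ), K * (r + a i))) ∪
    range (fun i ↦ (Pi.single i (K : ℝ), K * (r - a i))),
    ((finite_singleton _).union (finite_range _)).union (finite_range _), ?_, fun x _ ↦ ?_⟩
  · rintro _ ((rfl | ⟨i, rfl⟩) | ⟨i, rfl⟩)
    · simp
    · exact hnorm i _ (by simp)
    · exact hnorm i _ (by simp)
  · rcases isEmpty_or_nonempty (Fin n) with h | h
    · exact ⟨(0, K * r), by simp, by simp [Subsingleton.elim (x - a) 0]⟩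
    · obtain ⟨i, -, hi⟩ := Finset.exists_mem_eq_sup Finset.univ Finset.univ_nonempty
        fun i ↦ ‖(x - a) i‖₊
      have hnorm_eq : ‖x - a‖ = |x i - a i| := by
        rw [Pi.norm_def, hi]
        simp
      beta_reduce
      rw [hnorm_eq]
      rcases abs_choice (x i - a i) with habs | habs <;> rw [habs]
      · exact ⟨_, .inl (.inr ⟨i, rfl⟩), by simp; ring⟩
      · exact ⟨_, .inr ⟨i, rfl⟩, by simp; ring⟩

lemma isCutoff_cone {a : Fin n → ℝ} {r : ℝ} (h : ball a r ⊆ Ω) :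
    IsCutoff K Ω fun x ↦ Max.max 0 (K * (r - ‖x - a‖)) where
  lipschitzWith := by
    refine (LipschitzWith.of_dist_le_mul fun x y ↦ ?_).const_max 0
    rw [Real.dist_eq, ← mul_sub, abs_mul, NNReal.abs_eq, sub_sub_sub_cancel_left, dist_comm,
      dist_eq_norm, ← sub_sub_sub_cancel_right y x a]
    gcongr
    exact abs_norm_sub_norm_le _ _
  nonneg _ := le_max_left _ _
  eq_zero x hx := by
    refine max_eq_left (mul_nonpos_of_nonneg_of_nonpos K.2 (sub_nonpos.2 (not_lt.1 fun hlt ↦ ?_)))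
    exact hx (h (mem_ball_iff_norm.2 hlt))
  exists_isAffineSelection := by
    obtain ⟨Z, hZ, hK, hsel⟩ := exists_isAffineSelection_cone K a r
    have hzero : IsAffineSelection {(0 : (Fin n → ℝ) × ℝ)} univ fun _ ↦ 0 :=
      fun _ _ ↦ ⟨0, rfl, by simp⟩
    exact ⟨_, (finite_singleton 0).union hZ, fun p hp ↦ hp.elim (by rintro rfl; simp) (hK p),
      hzero.max hsel⟩

lemma exists_isCutoff_forall_mem_pos (hK : 0 < K) (hΩ : IsOpen Ω) {S : Set (Fin n → ℝ)}
    (hS : IsCompact S) (hSΩ : S ⊆ Ω) : ∃ χ, IsCutoff K Ω χ ∧ ∀ x ∈ S, 0 < χ x := by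
  refine hS.induction_on (p := fun s ↦ ∃ χ, IsCutoff K Ω χ ∧ ∀ x ∈ s, 0 < χ x)
    ⟨0, isCutoff_zero, by simp⟩ ?_ ?_ fun x hx ↦ ?_
  · rintro s t hst ⟨χ, hχ, hpos⟩
    exact ⟨χ, hχ, fun x hx ↦ hpos x (hst hx)⟩
  · rintro s t ⟨χ, hχ, hs⟩ ⟨ψ, hψ, ht⟩
    exact ⟨_, hχ.max hψ, fun x hx ↦ lt_max_iff.2 (hx.imp (hs x) (ht x))⟩
  · obtain ⟨r, hr, hball⟩ := Metric.isOpen_iff.1 hΩ x (hSΩ hx)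
    refine ⟨ball x r, mem_nhdsWithin_of_mem_nhds (ball_mem_nhds x hr), _, isCutoff_cone hball,
      fun y hy ↦ lt_max_of_lt_right (mul_pos (mod_cast hK) (sub_pos.2 ?_))⟩
    exact mem_ball_iff_norm.1 hy

lemma exists_isCutoff_volume_lt (hK : 0 < K) (hΩ : IsOpen Ω) (hΩv : volume Ω ≠ ∞) {ε : ℝ≥0∞}
    (hε : ε ≠ 0) : ∃ χ, IsCutoff K Ω χ ∧ ∃ m > 0, volume (Ω ∩ {x | χ x < m}) < ε := by
  obtain ⟨S, hSΩ, hS, hSε⟩ := hΩ.measurableSet.exists_isCompact_sdiff_lt hΩv hε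
  obtain ⟨χ, hχ, hpos⟩ := exists_isCutoff_forall_mem_pos hK hΩ hS hSΩ
  obtain ⟨m, hm, hle⟩ : ∃ m > 0, ∀ x ∈ S, m ≤ χ x :=
    hS.exists_forall_le' hχ.lipschitzWith.continuous.continuousOn hpos
  have hsub : Ω ∩ {x | χ x < m} ⊆ Ω \ S := fun x hx ↦ ⟨hx.1, fun hxS ↦ (hle x hxS).not_gt hx.2⟩
  exact ⟨χ, hχ, m, hm, (measure_mono hsub).trans_lt hSε⟩

end Cutoff

section SawWave

open scoped ENNReal NNReal

variable {n : ℕ} {l η τ : ℝ} {b : Fin n → ℝ} {Ω : Set (Fin n → ℝ)} {K C : ℝ≥0}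
  {χ : (Fin n → ℝ) → ℝ}

/-- The function oscillating in direction `b` at scale `η`, with phase `τ`, whose gradient takes
the values `(1 - l) • b` and `(-l) • b` with volume fractions `l` and `1 - l`. -/
noncomputable def sawWave (l η τ : ℝ) (b x : Fin n → ℝ) : ℝ := η * saw l (b ⬝ᵥ x / η + τ)

/-- The gradient of `sawWave`. -/
noncomputable def sawWaveSlope (l η τ : ℝ) (b x : Fin n → ℝ) : Fin n → ℝ :=
  if Int.fract (b ⬝ᵥ x / η + τ) ≤ l then (1 - l) • b else (-l) • b

lemma sawWave_nonneg (hl : l ∈ Icc 0 1) (hη : 0 < η) (x : Fin n → ℝ) : 0 ≤ sawWave l η τ b x :=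
  mul_nonneg hη.le (saw_nonneg hl _)

lemma sawWave_le (hl : l ∈ Icc 0 1) (hη : 0 < η) (x : Fin n → ℝ) : sawWave l η τ b x ≤ η :=
  mul_le_of_le_one_right hη.le (saw_le_one hl _)

lemma lipschitzWith_sawWave (hl : l ∈ Icc 0 1) (hη : 0 < η) (hb : LipschitzWith C (b ⬝ᵥ ·)) :
    LipschitzWith C (sawWave l η τ b) := by
  refine LipschitzWith.of_dist_le_mul fun x y ↦ le_trans ?_ (hb.dist_le_mul x y)
  have hsaw := (lipschitzWith_saw hl).dist_le_mul (b ⬝ᵥ x / η + τ) (b ⬝ᵥ y / η + τ)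
  rw [NNReal.coe_one, one_mul, dist_add_right, Real.dist_eq, Real.dist_eq, ← sub_div, abs_div,
    abs_of_pos hη, le_div_iff₀ hη] at hsaw
  rw [Real.dist_eq, Real.dist_eq, sawWave, sawWave, ← mul_sub, abs_mul, abs_of_pos hη, mul_comm]
  exact hsaw

lemma exists_finite_sawWave_eq (hη : 0 < η) (hΩ : Bornology.IsBounded Ω) :
    ∃ Z : Set ((Fin n → ℝ) × ℝ), Z.Finite ∧ (∀ p ∈ Z, p.1 = (1 - l) • b ∨ p.1 = (-l) • b) ∧
      ∀ x ∈ Ω, ∃ p ∈ Z, p.1 = sawWaveSlope l η τ b x ∧ sawWave l η τ b x = p.1 ⬝ᵥ x + p.2 := by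
  let T (x : Fin n → ℝ) : ℝ := b ⬝ᵥ x / η + τ
  have hT : Continuous T := by fun_prop
  have hb (x : Fin n → ℝ) : b ⬝ᵥ x = η * (T x - τ) := by simp [T, mul_div_cancel₀ _ hη.ne']
  have hTΩ : T '' Ω ⊆ Icc (sInf (T '' Ω)) (sSup (T '' Ω)) :=
    ((hΩ.isCompact_closure.image hT).isBounded.subset
      (image_mono subset_closure)).subset_Icc_sInf_sSup
  set S := Icc ⌊sInf (T '' Ω)⌋ ⌊sSup (T '' Ω)⌋
  refine ⟨(fun k : ℤ ↦ ((1 - l) • b, (1 - l) * η * (τ - k))) '' S ∪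
    (fun k : ℤ ↦ ((-l) • b, l * η * (k + 1 - τ))) '' S,
    ((finite_Icc _ _).image _).union ((finite_Icc _ _).image _), ?_, fun x hx ↦ ?_⟩
  · rintro _ (⟨k, -, rfl⟩ | ⟨k, -, rfl⟩)
    · exact .inl rfl
    · exact .inr rfl
  have hfloor : ⌊T x⌋ ∈ S := Int.floor_mono.mapsTo_Icc (hTΩ (mem_image_of_mem T hx))
  rcases le_or_gt (Int.fract (T x)) l with h | h
  · refine ⟨_, .inl ⟨_, hfloor, rfl⟩, (if_pos h).symm, ?_⟩
    rw [sawWave, saw_of_fract_le h, smul_dotProduct, hb, smul_eq_mul]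
    ring
  · refine ⟨_, .inr ⟨_, hfloor, rfl⟩, (if_neg h.not_ge).symm, ?_⟩
    rw [sawWave, saw_of_lt_fract h, smul_dotProduct, hb, smul_eq_mul]
    ring

lemma ae_exists_min_sawWave_eventuallyEq (hl : l ∈ Icc 0 1) (hη : 0 < η) (hΩ : IsOpen Ω)
    (hΩb : Bornology.IsBounded Ω) (hχ : IsCutoff K Ω χ) :
    ∀ᵐ x ∂volume.restrict Ω, ∃ p : (Fin n → ℝ) × ℝ,
      (fun y ↦ min (sawWave l η τ b y) (χ y)) =ᶠ[nhds x] (fun y ↦ p.1 ⬝ᵥ y + p.2) ∧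
      (p.1 = (1 - l) • b ∨ p.1 = (-l) • b ∨ ‖p.1‖ ≤ K) ∧
      (η < χ x → p.1 = sawWaveSlope l η τ b x) := by
  obtain ⟨Z₁, hZ₁, hslope, hwave⟩ := exists_finite_sawWave_eq (l := l) (τ := τ) (b := b) hη hΩb
  obtain ⟨Z₂, hZ₂, hK, hsel₂⟩ := hχ.exists_isAffineSelection
  have hsel₁ : IsAffineSelection Z₁ Ω (sawWave l η τ b) := fun x hx ↦
    (hwave x hx).imp fun _ hp ↦ ⟨hp.1, hp.2.2⟩
  have hsel := hsel₁.min fun x _ ↦ hsel₂ x (mem_univ x)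
  have hcont : Continuous (sawWave l η τ b) := continuous_const.mul
    ((lipschitzWith_saw hl).continuous.comp (by fun_prop))
  filter_upwards [hsel.ae_eventuallyEq (hZ₁.union hZ₂) hΩ
    (hcont.min hχ.lipschitzWith.continuous), ae_restrict_mem hΩ.measurableSet] with x hgerm hx
  rcases lt_or_ge η (χ x) with hηχ | hηχ
  · obtain ⟨p, hp, hpslope, hpx⟩ := hwave x hx
    have hmin : min (sawWave l η τ b x) (χ x) = p.1 ⬝ᵥ x + p.2 := by
      rw [min_eq_left ((sawWave_le hl hη x).trans hηχ.le), hpx]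
    exact ⟨p, hgerm p (.inl hp) hmin, (hslope p hp).imp_right .inl, fun _ ↦ hpslope⟩
  · obtain ⟨p, hp, hpx⟩ := hsel x hx
    exact ⟨p, hgerm p hp hpx, hp.elim (fun hp ↦ (hslope p hp).imp_right .inl)
      fun hp ↦ .inr (.inr (hK p hp)), fun h ↦ absurd h hηχ.not_gt⟩

end SawWave

section Laminate

open scoped ENNReal NNReal

variable {N n : ℕ} {U : Set (Mat N n)} {R K C D : ℝ≥0} {Ω : Set (Fin n → ℝ)} {A B ξ : Mat N n}
  {a c : Fin N → ℝ} {b : Fin n → ℝ} {l η τ : ℝ} {χ φ : (Fin n → ℝ) → ℝ} {σ : Mat N n → ℝ≥0∞}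

lemma hasAffineGerm_add_smul {p : (Fin n → ℝ) × ℝ} {x : Fin n → ℝ}
    (h : φ =ᶠ[nhds x] fun y ↦ p.1 ⬝ᵥ y + p.2) :
    HasAffineGerm (fun y ↦ ξ.mulVec y + c + φ y • a) (ξ + Matrix.vecMulVec a p.1) (c + p.2 • a)
      x := by
  filter_upwards [h] with y hy
  rw [hy, Matrix.add_mulVec, Matrix.vecMulVec_mulVec, op_smul_eq_smul, add_smul]
  abel

lemma exists_forall_add_vecMulVec_mem (hU : IsOpen U) (hξ : ξ ∈ U) (a : Fin N → ℝ) :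
    ∃ r : ℝ≥0, 0 < r ∧ ∀ w : Fin n → ℝ, ‖w‖ ≤ r → ξ + Matrix.vecMulVec a w ∈ U := by
  have hc : Continuous fun w : Fin n → ℝ ↦ ξ + Matrix.vecMulVec a w :=
    continuous_const.add (vecMulVecBilin ℝ ℝ a).continuous_of_finiteDimensional
  have hmem : (fun w : Fin n → ℝ ↦ ξ + Matrix.vecMulVec a w) ⁻¹' U ∈ nhds 0 :=
    (hU.preimage hc).mem_nhds
      (by rwa [mem_preimage, show Matrix.vecMulVec a (0 : Fin n → ℝ) = 0 from
        (vecMulVecBilin ℝ ℝ a).map_zero, add_zero])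
  obtain ⟨r, hr, hsub⟩ := Metric.nhds_basis_closedBall.mem_iff.1 hmem
  exact ⟨⟨r, hr.le⟩, hr, fun w hw ↦ hsub (mem_closedBall_zero_iff.2 hw)⟩

lemma lipschitzWith_dotProduct_of_sub_eq_vecMulVec (hA : LipschitzWith R A.mulVec)
    (hB : LipschitzWith R B.mulVec) (ha : a ≠ 0) (h : A - B = Matrix.vecMulVec a b) :
    LipschitzWith (2 * R / ‖a‖₊) (b ⬝ᵥ ·) := by
  have hsmul (x : Fin n → ℝ) : A.mulVec x - B.mulVec x = (b ⬝ᵥ x) • a := by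
    rw [← Matrix.sub_mulVec, h, Matrix.vecMulVec_mulVec, op_smul_eq_smul]
  refine LipschitzWith.of_dist_le_mul fun x y ↦ ?_
  have hdist := (hA.sub hB).dist_le_mul x y
  rw [hsmul, hsmul, dist_eq_norm, ← sub_smul, norm_smul] at hdist
  rw [NNReal.coe_div, div_mul_eq_mul_div, coe_nnnorm, le_div_iff₀ (norm_pos_iff.2 ha),
    dist_eq_norm, two_mul]
  exact hdist

lemma isAdmissible_laminate (hl : l ∈ Icc 0 1) (hη : 0 < η) (hΩ : IsOpen Ω)
    (hΩb : Bornology.IsBounded Ω) (hχ : IsCutoff K Ω χ) (hKC : K ≤ C)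
    (hξ : LipschitzWith R ξ.mulVec) (hb : LipschitzWith C (b ⬝ᵥ ·))
    (hA : ξ + Matrix.vecMulVec a ((1 - l) • b) ∈ U) (hB : ξ + Matrix.vecMulVec a ((-l) • b) ∈ U)
    (hK : ∀ w : Fin n → ℝ, ‖w‖ ≤ K → ξ + Matrix.vecMulVec a w ∈ U) (c : Fin N → ℝ) (τ : ℝ) :
    IsAdmissible U (R + C * ‖a‖₊) Ω (fun x ↦ ξ.mulVec x + c)
      fun x ↦ ξ.mulVec x + c + min (sawWave l η τ b x) (χ x) • a where
  lipschitzWith := by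
    have hmin : LipschitzWith C fun x ↦ min (sawWave l η τ b x) (χ x) := by
      simpa using (lipschitzWith_sawWave hl hη hb).min (hχ.lipschitzWith.weaken hKC)
    have hsmul : LipschitzWith (C * ‖a‖₊) fun x ↦ min (sawWave l η τ b x) (χ x) • a := by
      refine LipschitzWith.of_dist_le_mul fun x y ↦ ?_
      rw [dist_eq_norm, ← sub_smul, norm_smul, ← dist_eq_norm, NNReal.coe_mul, coe_nnnorm,
        mul_right_comm]
      gcongr
      exact hmin.dist_le_mul x y
    simpa using (hξ.add (LipschitzWith.const c)).add hsmul
  eq_of_notMem x hx := by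
    simp [hχ.eq_zero x hx, min_eq_right (sawWave_nonneg hl hη x)]
  exists_hasAffineGerm := by
    filter_upwards [ae_exists_min_sawWave_eventuallyEq (l := l) (τ := τ) (b := b) hl hη hΩ hΩb hχ]
      with x ⟨p, hgerm, hp, _⟩
    refine ⟨_, ?_, _, hasAffineGerm_add_smul hgerm⟩
    rcases hp with hp | hp | hp
    · rwa [hp]
    · rwa [hp]
    · exact hK _ hp

lemma setLIntegral_matGrad_laminate_le (hl : l ∈ Icc 0 1) (hη : 0 < η) (hΩ : IsOpen Ω)
    (hΩb : Bornology.IsBounded Ω) (hχ : IsCutoff K Ω χ) {u : (Fin n → ℝ) → Fin N → ℝ}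
    (hu : u = fun x ↦ ξ.mulVec x + c + min (sawWave l η τ b x) (χ x) • a)
    (hσ : ∀ᵐ x ∂volume.restrict Ω, σ (matGrad u x) ≤ D) :
    ∫⁻ x in Ω, σ (matGrad u x) ≤
      (∫⁻ x in Ω, σ (ξ + Matrix.vecMulVec a (sawWaveSlope l η τ b x))) +
        D * volume (Ω ∩ {x | χ x ≤ η}) := by
  have hmeas : MeasurableSet {x | χ x ≤ η} :=
    (isClosed_le hχ.lipschitzWith.continuous continuous_const).measurableSet
  calc ∫⁻ x in Ω, σ (matGrad u x)
      ≤ ∫⁻ x in Ω, (σ (ξ + Matrix.vecMulVec a (sawWaveSlope l η τ b x)) +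
          {x | χ x ≤ η}.indicator (fun _ ↦ (D : ℝ≥0∞)) x) := by
        refine lintegral_mono_ae ?_
        filter_upwards [hσ, ae_exists_min_sawWave_eventuallyEq (l := l) (τ := τ) (b := b) hl hη hΩ
          hΩb hχ] with x hD ⟨p, hgerm, _, hp⟩
        rcases le_or_gt (χ x) η with h | h
        · rw [indicator_of_mem (s := {x | χ x ≤ η}) h]
          exact hD.trans le_add_self
        · rw [hu, (hasAffineGerm_add_smul hgerm).matGrad_eq, hp h]
          exact le_self_add
    _ = _ := by
        rw [lintegral_add_right _ (measurable_const.indicator hmeas), lintegral_indicator hmeas,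
          setLIntegral_const, Measure.restrict_apply hmeas, inter_comm]

lemma exists_phase_setLIntegral_sawWaveSlope_le (hl : l ∈ Ioo 0 1) (b : Fin n → ℝ) (η : ℝ)
    (Ω : Set (Fin n → ℝ)) (g : (Fin n → ℝ) → ℝ≥0∞) :
    ∃ τ, ∫⁻ x in Ω, g (sawWaveSlope l η τ b x) ≤
      (ENNReal.ofReal l * g ((1 - l) • b) + ENNReal.ofReal (1 - l) * g ((-l) • b)) *
        volume Ω := by
  let f (t : ℝ) : ℝ≥0∞ := if Int.fract t ≤ l then g ((1 - l) • b) else g ((-l) • b)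
  have hf : Function.Periodic f 1 := fun t ↦ by simp only [f, Int.fract_add_one]
  have hfm : Measurable f :=
    Measurable.ite (measurable_fract measurableSet_Iic) measurable_const measurable_const
  obtain ⟨τ, hτ⟩ := exists_lintegral_comp_add_le_of_periodic (μ := volume.restrict Ω) hf hfm
    (y := fun x ↦ b ⬝ᵥ x / η) (by fun_prop)
  rw [setLIntegral_ite_fract_le hl, Measure.restrict_apply_univ] at hτ
  exact ⟨τ, by simpa only [sawWaveSlope, apply_ite g] using hτ⟩

lemma exists_isAdmissible_laminate (hU : IsOpen U) (hξ : ξ ∈ U) (hξR : LipschitzWith R ξ.mulVec)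
    (ha : a ≠ 0) (hb : LipschitzWith (C / ‖a‖₊) (b ⬝ᵥ ·)) (hl : l ∈ Ioo 0 1)
    (hA : ξ + Matrix.vecMulVec a ((1 - l) • b) ∈ U) (hB : ξ + Matrix.vecMulVec a ((-l) • b) ∈ U)
    (hσ : ∀ M ∈ U, σ M ≤ D) (hΩ : IsOpen Ω) (hΩb : Bornology.IsBounded Ω) (c : Fin N → ℝ)
    {ε : ℝ≥0} (hε : 0 < ε) :
    ∃ u, IsAdmissible U (R + (C + 1)) Ω (fun x ↦ ξ.mulVec x + c) u ∧
      (∀ x, dist (u x) (ξ.mulVec x + c) ≤ ε) ∧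
      ∫⁻ x in Ω, σ (matGrad u x) ≤
        (ENNReal.ofReal l * σ (ξ + Matrix.vecMulVec a ((1 - l) • b)) +
          ENNReal.ofReal (1 - l) * σ (ξ + Matrix.vecMulVec a ((-l) • b))) * volume Ω + ε := by
  have hl' : l ∈ Icc 0 1 := Ioo_subset_Icc_self hl
  have ha' : 0 < ‖a‖₊ := nnnorm_pos.2 ha
  obtain ⟨r, hr, hrU⟩ := exists_forall_add_vecMulVec_mem (n := n) hU hξ a
  obtain ⟨δ, hδ, hδε⟩ := ENNReal.exists_nnreal_pos_mul_lt (a := D) ENNReal.coe_ne_top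
    (ENNReal.coe_pos.2 hε).ne'
  obtain ⟨χ, hχ, m, hm, hχm⟩ := exists_isCutoff_volume_lt (K := min r (1 / ‖a‖₊))
    (lt_min hr (by positivity)) hΩ (hΩb.measure_lt_top (μ := volume)).ne (ENNReal.coe_pos.2 hδ).ne'
  obtain ⟨η, hη, hηlt⟩ := exists_between
    (lt_min hm (div_pos (NNReal.coe_pos.2 hε) (norm_pos_iff.2 ha)))
  obtain ⟨hηm, hηε⟩ := lt_min_iff.1 hηlt
  obtain ⟨τ, hτ⟩ := exists_phase_setLIntegral_sawWaveSlope_le hl b η Ω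
    fun w ↦ σ (ξ + Matrix.vecMulVec a w)
  have hu := isAdmissible_laminate (C := (C + 1) / ‖a‖₊) (U := U) hl' hη hΩ hΩb hχ
    ((min_le_right _ _).trans (by gcongr; exact le_add_self)) hξR
    (hb.weaken (by gcongr; exact le_self_add)) hA hB
    (fun w hw ↦ hrU w (hw.trans (mod_cast min_le_left _ _))) c τ
  rw [div_mul_cancel₀ _ ha'.ne'] at hu
  refine ⟨_, hu, fun x ↦ ?_, ?_⟩
  · rw [dist_eq_norm, add_sub_cancel_left, norm_smul, Real.norm_of_nonneg
      (le_min (sawWave_nonneg hl' hη x) (hχ.nonneg x)), ← le_div_iff₀ (norm_pos_iff.2 ha)]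
    exact (min_le_left _ _).trans ((sawWave_le hl' hη x).trans hηε.le)
  · refine (setLIntegral_matGrad_laminate_le (D := D) hl' hη hΩ hΩb hχ rfl
      (hu.mem_of_matGrad.mono fun x ↦ hσ _)).trans (add_le_add hτ ?_)
    have hsub : Ω ∩ {x | χ x ≤ η} ⊆ Ω ∩ {x | χ x < m} := fun x hx ↦ ⟨hx.1, hx.2.trans_lt hηm⟩
    calc (D : ℝ≥0∞) * volume (Ω ∩ {x | χ x ≤ η}) ≤ D * δ := by
          gcongr
          exact (measure_mono hsub).trans hχm.le
      _ ≤ ε := by rw [mul_comm]; exact hδε.le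

lemma exists_isAdmissible_of_rank_sub_eq_one (hU : IsOpen U)
    (hR : ∀ M ∈ U, LipschitzWith R M.mulVec) (hA : A ∈ U) (hB : B ∈ U) (hAB : (A - B).rank = 1)
    (hl : l ∈ Ioo 0 1) (hξ : l • A + (1 - l) • B ∈ U) (hσ : ∀ M ∈ U, σ M ≤ D) (hΩ : IsOpen Ω)
    (hΩb : Bornology.IsBounded Ω) (c : Fin N → ℝ) {ε : ℝ≥0} (hε : 0 < ε) :
    ∃ u, IsAdmissible U (R + (2 * R + 1)) Ω (fun x ↦ (l • A + (1 - l) • B).mulVec x + c) u ∧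
      (∀ x, dist (u x) ((l • A + (1 - l) • B).mulVec x + c) ≤ ε) ∧
      ∫⁻ x in Ω, σ (matGrad u x) ≤
        (ENNReal.ofReal l * σ A + ENNReal.ofReal (1 - l) * σ B) * volume Ω + ε := by
  obtain ⟨a, b, ha, -, hab⟩ := rank_eq_one_iff_exists_vecMulVec.1 hAB
  have hA_eq : l • A + (1 - l) • B + Matrix.vecMulVec a ((1 - l) • b) = A := by
    rw [Matrix.vecMulVec_smul, ← hab]
    module
  have hB_eq : l • A + (1 - l) • B + Matrix.vecMulVec a ((-l) • b) = B := by
    rw [Matrix.vecMulVec_smul, ← hab]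
    module
  have h := exists_isAdmissible_laminate (σ := σ) hU hξ (hR _ hξ) ha
    (lipschitzWith_dotProduct_of_sub_eq_vecMulVec (hR A hA) (hR B hB) ha hab) hl
    (hA_eq.symm ▸ hA) (hB_eq.symm ▸ hB) hσ hΩ hΩb c hε
  rwa [hA_eq, hB_eq] at h

end Laminate

section Relaxation

open scoped ENNReal NNReal

variable {N n : ℕ} {U E : Set (Mat N n)} {R D L : ℝ≥0} {A B ξ : Mat N n} {l : ℝ}

lemma exists_forall_mem_lipschitzWith_mulVec (hU : Bornology.IsBounded U) :
    ∃ R : ℝ≥0, ∀ A ∈ U, LipschitzWith R A.mulVec := by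
  let Φ : Mat N n →L[ℝ] (Fin n → ℝ) →L[ℝ] (Fin N → ℝ) :=
    (Matrix.toLin' ≪≫ₗ LinearMap.toContinuousLinearMap).toLinearMap.toContinuousLinearMap
  obtain ⟨r, hr, hsub⟩ := (Φ.lipschitz.isBounded_image hU).exists_pos_norm_le
  exact ⟨⟨r, hr.le⟩, fun A hA ↦ (Φ A).lipschitz.weaken (hsub _ (mem_image_of_mem Φ hA))⟩

lemma exists_forall_mem_infDist_le (hU : Bornology.IsBounded U) (E : Set (Mat N n)) :
    ∃ D : ℝ≥0, ∀ A ∈ U, infDist A E ≤ D := by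
  obtain ⟨r, hr, hsub⟩ := ((lipschitz_infDist_pt E).isBounded_image hU).exists_pos_norm_le
  exact ⟨⟨r, hr.le⟩, fun A hA ↦ (le_abs_self _).trans (hsub _ (mem_image_of_mem _ hA))⟩

lemma relaxedDist_combo_le (hU : IsOpen U) (hR : ∀ M ∈ U, LipschitzWith R M.mulVec)
    (hD : ∀ M ∈ U, relaxedDist U E (R + (2 * R + 1)) M ≤ D) (hA : A ∈ U) (hB : B ∈ U)
    (hAB : (A - B).rank = 1) (hl : l ∈ Ioo (0 : ℝ) 1) (hξ : l • A + (1 - l) • B ∈ U) :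
    relaxedDist U E (R + (2 * R + 1)) (l • A + (1 - l) • B) ≤
      ENNReal.ofReal l * relaxedDist U E (R + (2 * R + 1)) A +
        ENNReal.ofReal (1 - l) * relaxedDist U E (R + (2 * R + 1)) B := by
  refine sInf_le fun Ω hΩ hΩb b ε hε ↦ ?_
  obtain ⟨u, hu, huε, hcost⟩ := exists_isAdmissible_of_rank_sub_eq_one hU hR hA hB hAB hl hξ hD
    hΩ hΩb b (half_pos hε)
  obtain ⟨v, hv, hvε, hvcost⟩ := hu.exists_setLIntegral_infDist_le (E := E)
    (fun M hM ↦ ((hD M hM).trans_lt ENNReal.coe_lt_top).ne) hΩ hΩb (half_pos hε)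
  refine ⟨v, hv, fun x ↦ ?_, hvcost.trans ?_⟩
  · calc dist (v x) _ ≤ dist (v x) (u x) + dist (u x) _ := dist_triangle _ _ _
      _ ≤ (ε / 2 : ℝ≥0) + (ε / 2 : ℝ≥0) := add_le_add (hvε x) (huε x)
      _ = ε := by rw [← NNReal.coe_add, add_halves]
  · refine (add_le_add_left hcost _).trans_eq ?_
    rw [add_assoc, ← ENNReal.coe_add, add_halves]

lemma rankOneConvexOn_toReal_relaxedDist_sub (hU : IsOpen U)
    (hR : ∀ M ∈ U, LipschitzWith R M.mulVec)
    (hD : ∀ M ∈ U, relaxedDist U E (R + (2 * R + 1)) M ≤ D) (c : ℝ) :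
    RankOneConvexOn U fun ξ ↦ (relaxedDist U E (R + (2 * R + 1)) ξ).toReal - c := by
  intro A hA B hB hAB l hl hξ
  rcases hl.1.eq_or_lt with rfl | hl0
  · simp
  rcases hl.2.eq_or_lt with rfl | hl1
  · simp
  have hfin (M : Mat N n) (hM : M ∈ U) : relaxedDist U E (R + (2 * R + 1)) M ≠ ∞ :=
    ((hD M hM).trans_lt ENNReal.coe_lt_top).ne
  have hA' := ENNReal.mul_ne_top ENNReal.ofReal_ne_top (hfin A hA) (a := ENNReal.ofReal l)
  have hB' := ENNReal.mul_ne_top ENNReal.ofReal_ne_top (hfin B hB) (a := ENNReal.ofReal (1 - l))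
  have hle := ENNReal.toReal_mono (ENNReal.add_ne_top.2 ⟨hA', hB'⟩)
    (relaxedDist_combo_le hU hR hD hA hB hAB ⟨hl0, hl1⟩ hξ)
  rw [ENNReal.toReal_add hA' hB', ENNReal.toReal_mul, ENNReal.toReal_mul,
    ENNReal.toReal_ofReal hl.1, ENNReal.toReal_ofReal (sub_nonneg.2 hl.2)] at hle
  linarith

lemma relaxedDist_le_of_mem_RcoF {F : Set (Mat N n)} {ε : ℝ} (hU : IsOpen U)
    (hR : ∀ M ∈ U, LipschitzWith R M.mulVec)
    (hD : ∀ M ∈ U, infDist M E ≤ D) (hF : Bornology.IsBounded F) (hFU : RcoF F ⊆ U)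
    (hFE : ∀ η ∈ F, infDist η E ≤ ε) (hε : 0 ≤ ε) (hξ : ξ ∈ RcoF F) :
    relaxedDist U E (R + (2 * R + 1)) ξ ≤ ENNReal.ofReal ε := by
  have hdist (M : Mat N n) (hM : M ∈ U) :
      relaxedDist U E (R + (2 * R + 1)) M ≤ ENNReal.ofReal (infDist M E) :=
    relaxedDist_le_infDist hM ((hR M hM).weaken le_self_add)
  have hle (M : Mat N n) (hM : M ∈ U) : relaxedDist U E (R + (2 * R + 1)) M ≤ D :=
    (hdist M hM).trans ((ENNReal.ofReal_le_ofReal (hD M hM)).trans_eq ENNReal.ofReal_coe_nnreal)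
  have hconv := rankOneConvexOn_toReal_relaxedDist_sub hU hR hle ε
  have hnonpos := hconv.nonpos_of_mem_RcoF hU hF hFU
    ⟨D, forall_mem_image.2 fun M hM ↦ by
      linarith [ENNReal.toReal_le_coe_of_le_coe (hle M hM)]⟩
    (fun η hη ↦ by
      linarith [ENNReal.toReal_le_of_le_ofReal infDist_nonneg (hdist η (hFU (subset_RcoF F hη))),
        hFE η hη]) hξ
  exact (ENNReal.le_ofReal_iff_toReal_le ((hle ξ (hFU hξ)).trans_lt ENNReal.coe_lt_top).ne hε).2
    (sub_nonpos.1 hnonpos)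

end Relaxation

theorem stmt2_general {N n : ℕ} {ι : Type*} {l : Filter ι} [l.NeBot] {U E : Set (Mat N n)}
    {F : ι → Set (Mat N n)} (hU : IsOpen U) (hUb : Bornology.IsBounded U)
    (hsub : ∀ᶠ i in l, RcoF (F i) ⊆ U) (h1 : ∀ ε > 0, ∀ᶠ i in l, ∀ η ∈ F i, infDist η E ≤ ε)
    (h2 : ∀ ξ ∈ U, ∀ᶠ i in l, ξ ∈ RcoF (F i)) :
    HasRelaxationProperty U E := by
  obtain ⟨R, hR⟩ := exists_forall_mem_lipschitzWith_mulVec hUb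
  obtain ⟨D, hD⟩ := exists_forall_mem_infDist_le hUb E
  refine hasRelaxationProperty_of_relaxedDist_eq_zero (L := R + (2 * R + 1)) fun ξ hξ ↦ ?_
  refine nonpos_iff_eq_zero.1 (ENNReal.le_of_forall_pos_le_add fun ε hε _ ↦ ?_)
  obtain ⟨i, hi, hi1, hi2⟩ := (hsub.and ((h1 ε hε).and (h2 ξ hξ))).exists
  have hFb : Bornology.IsBounded (F i) := hUb.subset ((subset_RcoF (F i)).trans hi)
  simpa using relaxedDist_le_of_mem_RcoF hU hR hD hFb hi hi1 ε.2 hi2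

theorem stmt2 {N n : ℕ} (E : Set (Mat N n)) (hE : Bornology.IsBounded E)
    (Eδ : ℝ → Set (Mat N n)) (hEδc : ∀ δ > 0, IsCompact (Eδ δ))
    (hsub : ∀ δ > 0, RcoF (Eδ δ) ⊆ interior (RcoF E))
    (h1 : ∀ ε > 0, ∃ δ₀ > 0, ∀ δ ∈ Set.Ioc (0:ℝ) δ₀, ∀ η ∈ Eδ δ, Metric.infDist η E ≤ ε)
    (h2 : ∀ η ∈ interior (RcoF E), ∃ δ₀ > 0, ∀ δ ∈ Set.Ioc (0:ℝ) δ₀, η ∈ RcoF (Eδ δ)) :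
    HasRelaxationProperty (interior (RcoF E)) E :=
  stmt2_general (l := nhdsWithin 0 (Ioi 0)) isOpen_interior
    ((isBounded_RcoF hE).subset interior_subset)
    (eventually_mem_nhdsWithin.mono hsub)
    (fun ε hε ↦ mem_nhdsGT_iff_exists_Ioc_subset.2 (h1 ε hε))
    fun η hη ↦ mem_nhdsGT_iff_exists_Ioc_subset.2 (h2 η hη)

end Statements
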